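/- arXiv:2010.00952 — 3 statements merged into one kernel-verified Lean document; each statement's English description precedes it below -/
import Mathlib

section
/- Theorem 1(i), o(1/√k) rate of the PD3O algorithm: Suppose the stepsizes are constant, γ_k ≡ γ ∈ (0, 2/L_F), and η ≥ ‖K‖². Then the objective values along the PD3O iterates satisfy Ψ(x^k) − Ψ(x*) = o(1/√k); that is, √k · (Ψ(x^k) − Ψ(x*)) → 0 as k → ∞. -/
open Filter Topology RealInnerProductSpace

noncomputable section

/-- `p` is a minimizer of `y ↦ σ·G(y) + (1/2)‖y − z‖²`, i.e. `p = prox_{σG}(z)`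
(the minimizer is unique when `G` is convex). -/
def IsProxPt {E : Type*} [NormedAddCommGroup E] [InnerProductSpace ℝ E]
    (σ : ℝ) (G : E → ℝ) (z p : E) : Prop :=
  ∀ y, σ * G p + ‖p - z‖ ^ 2 / 2 ≤ σ * G y + ‖y - z‖ ^ 2 / 2

/-- `u ∈ ∂G(z)`. -/
def IsSubgradientAt {E : Type*} [NormedAddCommGroup E] [InnerProductSpace ℝ E]
    (G : E → ℝ) (z u : E) : Prop :=
  ∀ y, G z + ⟪u, y - z⟫ ≤ G y

theorem prox_subgrad {E : Type*} [NormedAddCommGroup E] [InnerProductSpace ℝ E]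
    {σ : ℝ} (hσ : 0 < σ) {G : E → ℝ} (hG : ConvexOn ℝ Set.univ G) {z p : E}
    (h : IsProxPt σ G z p) : IsSubgradientAt G p ((1/σ) • (z - p)) := by
  intro y
  have key : ∀ t : ℝ, 0 < t → t ≤ 1 →
      0 ≤ σ * (G y - G p) + ⟪p - z, y - p⟫ + t * (‖y - p‖^2 / 2) := by
    intro t ht ht1
    have h1 := h ((1 - t) • p + t • y)
    have h2 := hG.2 (Set.mem_univ p) (Set.mem_univ y) (by linarith : 0 ≤ 1 - t) ht.le (by ring)
    have e : (1 - t) • p + t • y - z = (p - z) + t • (y - p) := by module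
    rw [e, norm_add_sq_real, norm_smul, inner_smul_right] at h1
    simp only [smul_eq_mul, Real.norm_eq_abs, mul_pow, sq_abs] at h1 h2
    have h3 : σ * G ((1 - t) • p + t • y) ≤ σ * ((1 - t) * G p + t * G y) :=
      mul_le_mul_of_nonneg_left h2 hσ.le
    have h4 : 0 ≤ t * (σ * (G y - G p) + ⟪p - z, y - p⟫ + t * (‖y - p‖^2 / 2)) := by
      nlinarith
    exact nonneg_of_mul_nonneg_right h4 ht
  have lim : Tendsto (fun t : ℝ => σ * (G y - G p) + ⟪p - z, y - p⟫ + t * (‖y - p‖^2 / 2))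
      (𝓝[>] 0) (𝓝 (σ * (G y - G p) + ⟪p - z, y - p⟫ + 0 * (‖y - p‖^2 / 2))) := by
    apply Tendsto.mono_left _ nhdsWithin_le_nhds
    apply Continuous.tendsto
    fun_prop
  have h0 := ge_of_tendsto lim (by
    filter_upwards [Ioc_mem_nhdsGT (zero_lt_one' ℝ)] with t ht
    exact key t ht.1 ht.2)
  rw [inner_smul_left, ← neg_sub p z, inner_neg_left]
  simp only [conj_trivial]
  have : 0 ≤ (1/σ) * (σ * (G y - G p) + ⟪p - z, y - p⟫ + 0 * (‖y - p‖^2 / 2)) :=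
    mul_nonneg (by positivity) h0
  have e2 : (1/σ) * (σ * (G y - G p) + ⟪p - z, y - p⟫ + 0 * (‖y - p‖^2 / 2))
     = G y - G p + 1/σ * ⟪p - z, y - p⟫ := by field_simp; ring
  linarith

section
variable {E : Type*} [NormedAddCommGroup E] [InnerProductSpace ℝ E] [FiniteDimensional ℝ E]

theorem line_deriv {F : E → ℝ} {F' : E → E} (hg : ∀ z, HasGradientAt F (F' z) z) (z d : E) (t : ℝ) :
    HasDerivAt (fun t : ℝ => F (z + t • d)) ⟪F' (z + t • d), d⟫ t := by
  have h1 := (hg (z + t • d)).hasFDerivAt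
  have h2 : HasDerivAt (fun t : ℝ => z + t • d) d t := by
    simpa using ((hasDerivAt_id t).smul_const d).const_add z
  have := h1.comp_hasDerivAt t h2
  rw [InnerProductSpace.toDual_apply_apply] at this
  exact this

theorem grad_subgrad {F : E → ℝ} {F' : E → E} (hF : ConvexOn ℝ Set.univ F)
    (hg : ∀ z, HasGradientAt F (F' z) z) (z : E) : IsSubgradientAt F z (F' z) := by
  intro y
  have h1 := line_deriv hg z (y - z) 0
  have hc : ConvexOn ℝ Set.univ (fun t : ℝ => F (z + t • (y - z))) := by
    refine ⟨convex_univ, fun a _ b _ p q hp hq hpq => ?_⟩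
    have := hF.2 (Set.mem_univ (z + a • (y - z))) (Set.mem_univ (z + b • (y - z))) hp hq hpq
    have e : p • (z + a • (y - z)) + q • (z + b • (y - z)) = z + (p • a + q • b) • (y - z) := by
      have : p = 1 - q := by linarith
      subst this
      simp only [smul_eq_mul]
      module
    rw [e] at this
    exact this
  have h2 := hc.le_slope_of_hasDerivAt (Set.mem_univ 0) (Set.mem_univ 1) zero_lt_one h1
  simp [slope_def_field] at h2
  linarith

theorem descent {F : E → ℝ} {F' : E → E} {L : ℝ}
    (hg : ∀ z, HasGradientAt F (F' z) z)
    (hl : ∀ z z', ‖F' z - F' z'‖ ≤ L * ‖z - z'‖) (z d : E) :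
    F (z + d) ≤ F z + ⟪F' z, d⟫ + L / 2 * ‖d‖^2 := by
  have hd : ∀ t : ℝ, HasDerivAt (fun t : ℝ => F (z + t • d) - t * ⟪F' z, d⟫ - t^2 * (L / 2 * ‖d‖^2))
      (⟪F' (z + t • d), d⟫ - 1 * ⟪F' z, d⟫ - ((2:ℕ) * t^(2-1)) * (L / 2 * ‖d‖^2)) t := by
    intro t
    exact ((line_deriv hg z d t).sub ((hasDerivAt_id t).mul_const _)).sub
      ((hasDerivAt_pow 2 t).mul_const _)
  have ha : AntitoneOn (fun t : ℝ => F (z + t • d) - t * ⟪F' z, d⟫ - t^2 * (L / 2 * ‖d‖^2))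
      (Set.Icc 0 1) := by
    apply antitoneOn_of_deriv_nonpos (convex_Icc 0 1)
    · exact fun t _ => (hd t).continuousAt.continuousWithinAt
    · exact fun t _ => (hd t).differentiableAt.differentiableWithinAt
    · intro t ht
      rw [interior_Icc] at ht
      rw [(hd t).deriv]
      have h1 : ⟪F' (z + t • d) - F' z, d⟫ ≤ ‖F' (z + t • d) - F' z‖ * ‖d‖ := real_inner_le_norm _ _
      have h2 := hl (z + t • d) z
      rw [add_sub_cancel_left, norm_smul, Real.norm_eq_abs, abs_of_pos ht.1] at h2
      have h3 := mul_le_mul_of_nonneg_right h2 (norm_nonneg d)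
      rw [inner_sub_left] at h1
      norm_num
      nlinarith
  have := ha (by simp : (0:ℝ) ∈ Set.Icc (0:ℝ) 1) (by simp : (1:ℝ) ∈ Set.Icc (0:ℝ) 1) zero_le_one
  simp at this
  linarith

theorem coco_half {F : E → ℝ} {F' : E → E} {L : ℝ} (hL : 0 < L) (hF : ConvexOn ℝ Set.univ F)
    (hg : ∀ z, HasGradientAt F (F' z) z)
    (hl : ∀ z z', ‖F' z - F' z'‖ ≤ L * ‖z - z'‖) (x y : E) :
    F x + ⟪F' x, y - x⟫ + 1 / (2 * L) * ‖F' y - F' x‖^2 ≤ F y := by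
  have h1 := descent hg hl y (-((1/L) • (F' y - F' x)))
  have h2 := grad_subgrad hF hg x (y + -((1/L) • (F' y - F' x)))
  have e : y + -((1/L) • (F' y - F' x)) - x = (y - x) + -((1/L) • (F' y - F' x)) := by abel
  rw [e, inner_add_right] at h2
  rw [norm_neg, norm_smul] at h1
  simp only [inner_neg_right, inner_smul_right, Real.norm_eq_abs, mul_pow, sq_abs] at h1 h2
  have h3 : ‖F' y - F' x‖^2 = ⟪F' y, F' y - F' x⟫ - ⟪F' x, F' y - F' x⟫ := by
    rw [← inner_sub_left, real_inner_self_eq_norm_sq]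
  have h4 : L / 2 * ((1/L)^2 * ‖F' y - F' x‖^2) = 1/(2*L) * ‖F' y - F' x‖^2 := by field_simp
  have h5 : 1/L * ‖F' y - F' x‖^2 = 1/L * ⟪F' y, F' y - F' x⟫ - 1/L * ⟪F' x, F' y - F' x⟫ := by
    rw [h3]; ring
  have h6 : 1/(2*L) * ‖F' y - F' x‖^2 = 1/2 * (1/L * ‖F' y - F' x‖^2) := by field_simp
  linarith

theorem coco {F : E → ℝ} {F' : E → E} {L : ℝ} (hL : 0 < L) (hF : ConvexOn ℝ Set.univ F)
    (hg : ∀ z, HasGradientAt F (F' z) z)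
    (hl : ∀ z z', ‖F' z - F' z'‖ ≤ L * ‖z - z'‖) (x y : E) :
    ‖F' x - F' y‖^2 ≤ L * ⟪F' x - F' y, x - y⟫ := by
  have h1 := coco_half hL hF hg hl x y
  have h2 := coco_half hL hF hg hl y x
  rw [norm_sub_rev (F' y)] at h1
  rw [← neg_sub x y, inner_neg_right] at h1
  rw [inner_sub_left]
  have h3 : L * (1 / (2 * L) * ‖F' x - F' y‖^2) = ‖F' x - F' y‖^2 / 2 := by field_simp
  nlinarith

/-- uniform Lipschitz and subgradient bounds of a convex function on balls -/
theorem convex_lip {H : E → ℝ} (hH : ConvexOn ℝ Set.univ H) (B : ℝ) :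
    ∃ C : ℝ, 0 ≤ C ∧ (∀ w p, ‖w‖ ≤ B → ‖p‖ ≤ B → H w - H p ≤ C * ‖w - p‖) ∧
      (∀ p u, ‖p‖ ≤ B → IsSubgradientAt H p u → ‖u‖ ≤ C) := by
  have hc : Continuous H := hH.locallyLipschitz.continuous
  have hb : Bornology.IsBounded (H '' Metric.ball 0 (B + 3)) :=
    ((isCompact_closedBall (0:E) (B+3)).image hc).isBounded.subset
      (Set.image_mono Metric.ball_subset_closedBall)
  obtain ⟨C, hC⟩ := (hH.subset (Set.subset_univ _) (convex_ball 0 (B+3))).exists_lipschitzOnWith_of_isBounded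
    (by linarith : B + 2 < B + 3) hb
  have hlip : ∀ w p : E, ‖w‖ < B + 2 → ‖p‖ < B + 2 → H w - H p ≤ C * ‖w - p‖ := by
    intro w p hw hp
    have := hC.dist_le_mul w (by simpa using hw) p (by simpa using hp)
    rw [Real.dist_eq, dist_eq_norm] at this
    exact (le_abs_self _).trans this
  refine ⟨C, C.2, fun w p hw hp => hlip w p (by linarith) (by linarith), ?_⟩
  intro p u hp hu
  by_cases h0 : u = 0
  · simp [h0]
  have hn : 0 < ‖u‖ := norm_pos_iff.2 h0
  have h1 := hu (p + (1/‖u‖) • u)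
  have hn1 : ‖(1/‖u‖) • u‖ = 1 := by
    rw [norm_smul]; simp [hn.ne']
  have h2 := hlip (p + (1/‖u‖) • u) p
    (by have := norm_add_le p ((1/‖u‖) • u); linarith) (by linarith)
  rw [add_sub_cancel_left] at h1 h2
  rw [hn1] at h2
  rw [inner_smul_right, real_inner_self_eq_norm_sq] at h1
  have : 1 / ‖u‖ * ‖u‖^2 = ‖u‖ := by field_simp
  linarith

end

theorem subgrad_mono {E : Type*} [NormedAddCommGroup E] [InnerProductSpace ℝ E]
    {G : E → ℝ} {a b u v : E} (h1 : IsSubgradientAt G a u)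
    (h2 : IsSubgradientAt G b v) : 0 ≤ ⟪u - v, a - b⟫ := by
  have h1 := h1 b
  have h2 := h2 a
  rw [← neg_sub a b, inner_neg_right] at h1
  rw [inner_sub_left]
  linarith

theorem o_inv {D : ℕ → ℝ} (hn : ∀ k, 0 ≤ D k) (ha : ∀ k, D (k+1) ≤ D k) {c B : ℝ} (hc : 0 < c)
    (V : ℕ → ℝ) (hV : ∀ k, B ≤ V k) (h : ∀ k, V (k+1) + c * D k ≤ V k) :
    Tendsto (fun k : ℕ => ((k:ℝ) + 1) * D k) atTop (𝓝 0) := by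
  have hVa : Antitone V := antitone_nat_of_succ_le fun k => by
    have := h k; have := mul_nonneg hc.le (hn k); linarith
  have hDa : Antitone D := antitone_nat_of_succ_le ha
  obtain ⟨l, hl⟩ : ∃ l, Tendsto V atTop (𝓝 l) :=
    ⟨_, tendsto_atTop_ciInf hVa ⟨B, by rintro _ ⟨k, rfl⟩; exact hV k⟩⟩
  have hsum : ∀ m n, V (m + n) + c * (n * D (m + n)) ≤ V m := by
    intro m n
    have : ∀ j ≤ n, V (m + j) + c * (j * D (m + n)) ≤ V m := by
      intro j
      induction j with
      | zero => simp
      | succ j ih =>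
        intro hj
        have h1 := ih (by omega)
        have h2 := h (m + j)
        have h3 := mul_le_mul_of_nonneg_left (hDa (by omega : m + j ≤ m + n)) hc.le
        push_cast
        rw [← add_assoc]
        linarith
    exact this n le_rfl
  have hdiv : Tendsto (fun k : ℕ => k / 2) atTop atTop :=
    Nat.tendsto_div_const_atTop (by norm_num)
  have hup : Tendsto (fun k : ℕ => (2 / c) * (V (k/2) - V k)) atTop (𝓝 0) := by
    have := ((hl.comp hdiv).sub hl).const_mul (2/c)
    simpa using this
  refine squeeze_zero (fun k => mul_nonneg (by positivity) (hn k))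
    (g := fun k => (2 / c) * (V (k/2) - V k) + D k) (fun k => ?_) ?_
  · have h1 := hsum (k/2) (k - k/2)
    rw [Nat.add_sub_cancel' (Nat.div_le_self k 2)] at h1
    have h2 : (k:ℝ) ≤ 2 * ((k - k/2 : ℕ) : ℝ) := by
      have : k ≤ 2 * (k - k/2) := by omega
      exact_mod_cast this
    have h3 : (k:ℝ) * D k ≤ 2 * ((k - k/2 : ℕ) : ℝ) * D k := mul_le_mul_of_nonneg_right h2 (hn k)
    have h4 : 2 / c * (c * (((k - k/2 : ℕ) : ℝ) * D k)) = 2 * ((k - k/2 : ℕ) : ℝ) * D k := by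
      field_simp
    have h5 : 2 / c * (c * (((k - k/2 : ℕ) : ℝ) * D k)) ≤ 2 / c * (V (k/2) - V k) :=
      mul_le_mul_of_nonneg_left (by linarith) (by positivity)
    linarith
  · have hD0 : Tendsto D atTop (𝓝 0) := by
      refine squeeze_zero hn (g := fun k => (1/c) * (V k - V (k+1))) (fun k => ?_) ?_
      · have h1 := h k
        rw [one_div, inv_mul_eq_div, le_div_iff₀ hc]
        linarith
      · have := (hl.sub (hl.comp (tendsto_add_atTop_nat 1))).const_mul (1/c)
        simpa using this
    simpa using hup.add hD0

theorem one_step {X U : Type*} [NormedAddCommGroup X] [InnerProductSpace ℝ X]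
    [FiniteDimensional ℝ X] [NormedAddCommGroup U] [InnerProductSpace ℝ U] [FiniteDimensional ℝ U]
    (K : X →L[ℝ] U) {γ η L : ℝ} (hγ : 0 < γ) (hL : 0 < L)
    (s s' g xx : X) (u u' p : U) (hxx : xx = γ • (s' + ContinuousLinearMap.adjoint K u' + g))
    (hp : p = K xx + γ • (η • (u - u')
      + K ((s' + ContinuousLinearMap.adjoint K u') - (s + ContinuousLinearMap.adjoint K u))))
    (h1 : 0 ≤ ⟪s - (1/γ) • xx, xx⟫) (h2 : 0 ≤ ⟪u', p⟫) (h3 : ‖g‖^2 ≤ L * ⟪g, xx⟫) :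
    (‖s'‖^2 + (η * ‖u'‖^2 - ‖ContinuousLinearMap.adjoint K u'‖^2)) +
      ((1 - γ * L / 2) * ‖s - s'‖^2
        + (η * ‖u - u'‖^2 - ‖ContinuousLinearMap.adjoint K (u - u')‖^2)) ≤
    ‖s‖^2 + (η * ‖u‖^2 - ‖ContinuousLinearMap.adjoint K u‖^2) := by
  subst hp
  rw [inner_add_right, inner_smul_right, inner_add_right, ← ContinuousLinearMap.adjoint_inner_left,
    ← ContinuousLinearMap.adjoint_inner_left, map_sub] at *
  generalize ContinuousLinearMap.adjoint K u = a at *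
  generalize ContinuousLinearMap.adjoint K u' = a' at *
  subst hxx
  rw [smul_smul, one_div, inv_mul_cancel₀ hγ.ne', one_smul] at h1
  rw [inner_smul_right] at h1 h2 h3
  have h1' := nonneg_of_mul_nonneg_right h1 hγ
  rw [← mul_add] at h2
  have h2' := nonneg_of_mul_nonneg_right h2 hγ
  have hy : 0 ≤ ‖(γ * L / 2) • (s - s') - g‖^2 := sq_nonneg _
  have h3' : 2 / (γ * L) * ‖g‖^2 ≤ 2 * ⟪g, s' + a' + g⟫ := by
    rw [div_mul_eq_mul_div, div_le_iff₀ (by positivity)]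
    linarith
  have hy' : 0 ≤ (γ * L / 2) * ‖s - s'‖^2 - 2 * ⟪s - s', g⟫ + 2 / (γ * L) * ‖g‖^2 := by
    rw [norm_sub_sq_real, norm_smul, inner_smul_left, mul_pow, Real.norm_eq_abs, sq_abs] at hy
    have : (γ * L / 2) * ‖s - s'‖^2 - 2 * ⟪s - s', g⟫ + 2 / (γ * L) * ‖g‖^2
      = 2 / (γ * L) * ((γ * L / 2)^2 * ‖s - s'‖^2 - 2 * (γ * L / 2 * ⟪s - s', g⟫) + ‖g‖^2) := by
      field_simp
    rw [this]
    exact mul_nonneg (by positivity) hy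
  have e1 : 2 * ⟪s - (s' + a' + g), s' + a' + g⟫ + 2 * (⟪a', s' + a' + g⟫ +
      (⟪u', η • (u - u')⟫ + ⟪a', s' + a' - (s + a)⟫)) =
      ‖s‖^2 + (η * ‖u‖^2 - ‖a‖^2) - (‖s'‖^2 + (η * ‖u'‖^2 - ‖a'‖^2))
      - (‖s - s'‖^2 + (η * ‖u - u'‖^2 - ‖a - a'‖^2)) + 2 * ⟪s - s', g⟫ - 2 * ⟪g, s' + a' + g⟫ := by
    simp only [← real_inner_self_eq_norm_sq, inner_sub_left, inner_sub_right, inner_add_left,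
      inner_add_right, inner_smul_right]
    rw [real_inner_comm s s', real_inner_comm a a', real_inner_comm u u', real_inner_comm s a',
      real_inner_comm g a', real_inner_comm g s', real_inner_comm s' a']
    ring
  linarith

theorem pd3o_aux
    {𝒳 𝒰 : Type*}
    [NormedAddCommGroup 𝒳] [InnerProductSpace ℝ 𝒳] [FiniteDimensional ℝ 𝒳]
    [NormedAddCommGroup 𝒰] [InnerProductSpace ℝ 𝒰] [FiniteDimensional ℝ 𝒰]
    (K : 𝒳 →L[ℝ] 𝒰)
    (F R : 𝒳 → ℝ) (H : 𝒰 → ℝ) (F' : 𝒳 → 𝒳) (L_F : ℝ)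
    (hLF : 0 < L_F)
    (hFconv : ConvexOn ℝ Set.univ F)
    (hRconv : ConvexOn ℝ Set.univ R)
    (hHconv : ConvexOn ℝ Set.univ H)
    (hFgrad : ∀ z, HasGradientAt F (F' z) z)
    (hFlip : ∀ z z', ‖F' z - F' z'‖ ≤ L_F * ‖z - z'‖)
    -- Assumption 1: existence of a primal-dual solution
    (xstar : 𝒳) (rstar : 𝒳) (hstar : 𝒰)
    (hrstar : IsSubgradientAt R xstar rstar)
    (hhstar : IsSubgradientAt H (K xstar) hstar)
    (hopt : F' xstar + rstar + (ContinuousLinearMap.adjoint K) hstar = 0)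
    -- parameters
    (γ η : ℝ) (hη0 : 0 < η) (hγ0 : 0 < γ) (hγ2 : γ < 2 / L_F) (hη : ‖K‖ ^ 2 ≤ η)
    -- PD3O iterates
    (x q : ℕ → 𝒳) (u : ℕ → 𝒰)
    (hx : ∀ k, IsProxPt γ R
      (γ • (q k - (ContinuousLinearMap.adjoint K) (u k))) (x (k+1)))
    (hq : ∀ k, q (k+1) = (1/γ) • x (k+1) - F' (x (k+1)))
    (hu : ∀ k, ∃ p, IsProxPt (γ*η) H
        ((γ*η) • (u k + (1/η) • K ((1/γ) • x (k+1) + q (k+1) - q k))) p ∧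
      u (k+1) = (u k + (1/η) • K ((1/γ) • x (k+1) + q (k+1) - q k))
        - (1/(γ*η)) • p) :
    Tendsto (fun k : ℕ => Real.sqrt k *
      ((F (x k) + R (x k) + H (K (x k))) - (F xstar + R xstar + H (K xstar))))
      atTop (𝓝 0) := by
  set A := ContinuousLinearMap.adjoint K with hA
  choose P hP1 hP2 using hu
  obtain ⟨s, hs⟩ : ∃ s : ℕ → 𝒳, ∀ k, s k = q k - A (u k) := ⟨_, fun k => rfl⟩
  have hγη : 0 < γ * η := mul_pos hγ0 hη0
  have hr : ∀ k, IsSubgradientAt R (x (k+1)) (s k - (1/γ) • x (k+1)) := by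
    intro k
    have := prox_subgrad hγ0 hRconv (hx k)
    rwa [smul_sub, smul_smul, one_div, inv_mul_cancel₀ hγ0.ne', one_smul, ← hs, ← one_div] at this
  have hp : ∀ k, IsSubgradientAt H (P k) (u (k+1)) := by
    intro k
    have := prox_subgrad hγη hHconv (hP1 k)
    rwa [smul_sub, smul_smul, one_div (γ * η), inv_mul_cancel₀ hγη.ne', one_smul, ← one_div (γ * η),
      ← hP2] at this
  have hxq : ∀ k, x (k+1) = γ • (q (k+1) + F' (x (k+1))) := by
    intro k
    rw [hq k, sub_add_cancel, smul_smul, mul_one_div, div_self hγ0.ne', one_smul]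
  have hqs : ∀ k, q k = s k + A (u k) := fun k => by rw [hs]; abel
  have hP : ∀ k, P k = K (x (k+1)) + γ • (η • (u k - u (k+1)) + K (q (k+1) - q k)) := by
    intro k
    have h1 : (γ * η) • u (k+1) = (γ * η) • (u k + (1/η) • K ((1/γ) • x (k+1) + q (k+1) - q k))
        - P k := by
      rw [hP2 k, smul_sub, smul_smul _ (1 / (γ * η)), mul_one_div, div_self hγη.ne', one_smul]
    have h2 : P k = (γ * η) • (u k + (1/η) • K ((1/γ) • x (k+1) + q (k+1) - q k))
        - (γ * η) • u (k+1) := by rw [h1]; abel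
    rw [h2]
    simp only [map_sub, map_add, map_smul]
    match_scalars <;> field_simp
  have hMnn : ∀ w : 𝒰, 0 ≤ η * ‖w‖^2 - ‖A w‖^2 := by
    intro w
    have h1 : ‖A w‖ ≤ ‖K‖ * ‖w‖ := by
      have := A.le_opNorm w
      rwa [hA, LinearIsometryEquiv.norm_map] at this
    have h2 : ‖A w‖^2 ≤ (‖K‖ * ‖w‖)^2 := pow_le_pow_left₀ (norm_nonneg _) h1 2
    have h3 : ‖K‖^2 * ‖w‖^2 ≤ η * ‖w‖^2 := mul_le_mul_of_nonneg_right hη (sq_nonneg _)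
    rw [mul_pow] at h2
    linarith
  have hKle : ∀ w : 𝒳, ‖K w‖^2 ≤ η * ‖w‖^2 := by
    intro w
    have h2 : ‖K w‖^2 ≤ (‖K‖ * ‖w‖)^2 := pow_le_pow_left₀ (norm_nonneg _) (K.le_opNorm w) 2
    have h3 : ‖K‖^2 * ‖w‖^2 ≤ η * ‖w‖^2 := mul_le_mul_of_nonneg_right hη (sq_nonneg _)
    rw [mul_pow] at h2
    linarith
  have hMle : ∀ w : 𝒰, ‖η • w - K (A w)‖^2 ≤ η * (η * ‖w‖^2 - ‖A w‖^2) := by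
    intro w
    have h1 := hKle (A w)
    have h2 : ⟪w, K (A w)⟫ = ‖A w‖^2 := by
      rw [← ContinuousLinearMap.adjoint_inner_left, real_inner_self_eq_norm_sq]
    rw [norm_sub_sq_real, inner_smul_left, h2, norm_smul, mul_pow, Real.norm_eq_abs, sq_abs]
    simp only [conj_trivial]
    nlinarith
  have hc : 0 < 1 - γ * L_F / 2 := by
    rw [lt_div_iff₀ hLF] at hγ2
    linarith
  have hcle : 1 - γ * L_F / 2 ≤ 1 := by
    have := mul_pos hγ0 hLF
    linarith
  -- the star quantities
  obtain ⟨ss, hss⟩ : ∃ ss : 𝒳, ss = (1/γ) • xstar - F' xstar - A hstar := ⟨_, rfl⟩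
  have hrs : rstar = ss - (1/γ) • xstar := by
    rw [hss]
    have : rstar = - F' xstar - A hstar + (F' xstar + rstar + A hstar) := by abel
    rw [this, hopt]
    abel
  have hγγ : γ * (1/γ) = 1 := mul_one_div_cancel hγ0.ne'
  obtain ⟨V, hV⟩ : ∃ V : ℕ → ℝ, ∀ k, V k = ‖s k - ss‖^2 +
    (η * ‖u k - hstar‖^2 - ‖A (u k - hstar)‖^2) := ⟨_, fun k => rfl⟩
  obtain ⟨D, hD⟩ : ∃ D : ℕ → ℝ, ∀ k, D k = ‖s k - s (k+1)‖^2 +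
    (η * ‖u k - u (k+1)‖^2 - ‖A (u k - u (k+1))‖^2) := ⟨_, fun k => rfl⟩
  have hDn : ∀ k, 0 ≤ D k := fun k => by
    rw [hD]; exact add_nonneg (sq_nonneg _) (hMnn _)
  have hVn : ∀ k, 0 ≤ V k := fun k => by
    rw [hV]; exact add_nonneg (sq_nonneg _) (hMnn _)
  have hrm : ∀ k, 0 ≤ ⟪(s k - ss) - (1/γ) • (x (k+1) - xstar), x (k+1) - xstar⟫ := by
    intro k
    have := subgrad_mono (hr k) (hrs ▸ hrstar)
    rwa [show s k - (1/γ) • x (k+1) - (ss - (1/γ) • xstar)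
      = (s k - ss) - (1/γ) • (x (k+1) - xstar) by module] at this
  have hVstep : ∀ k, V (k+1) + (1 - γ * L_F / 2) * D k ≤ V k := by
    intro k
    have h := one_step K (γ := γ) (η := η) (L := L_F) hγ0 hLF (s k - ss) (s (k+1) - ss)
      (F' (x (k+1)) - F' xstar) (x (k+1) - xstar) (u k - hstar) (u (k+1) - hstar)
      (P k - K xstar)
      (by
        rw [← hA, map_sub]
        conv_lhs => rw [hxq k, hqs]
        rw [hss]
        match_scalars <;> field_simp <;> ring)
      (by
        rw [← hA, hP, hqs, hqs]
        simp only [map_sub, map_add]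
        module)
      (hrm k) (subgrad_mono (hp k) hhstar) (coco hLF hFconv hFgrad hFlip _ _)
    rw [← hA, ← hV, ← hV, sub_sub_sub_cancel_right, sub_sub_sub_cancel_right] at h
    have h2 := mul_le_mul_of_nonneg_right hcle (hMnn (u k - u (k+1)))
    rw [hD]
    linarith
  have hDstep : ∀ k, D (k+1) ≤ D k := by
    intro k
    have h := one_step K (γ := γ) (η := η) (L := L_F) hγ0 hLF (s k - s (k+1)) (s (k+1) - s (k+1+1))
      (F' (x (k+1)) - F' (x (k+1+1))) (x (k+1) - x (k+1+1)) (u k - u (k+1)) (u (k+1) - u (k+1+1))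
      (P k - P (k+1))
      (by
        rw [← hA, map_sub]
        conv_lhs => rw [hxq k, hxq (k+1), hqs, hqs]
        module)
      (by
        rw [← hA, hP, hP, hqs, hqs, hqs]
        simp only [map_sub, map_add]
        module)
      (by
        have := subgrad_mono (hr k) (hr (k+1))
        rwa [show s k - (1/γ) • x (k+1) - (s (k+1) - (1/γ) • x (k+1+1))
          = (s k - s (k+1)) - (1/γ) • (x (k+1) - x (k+1+1)) by module] at this)
      (subgrad_mono (hp k) (hp (k+1))) (coco hLF hFconv hFgrad hFlip _ _)
    rw [← hA, ← hD, ← hD] at h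
    have h1 := hMnn (u k - u (k+1) - (u (k+1) - u (k+1+1)))
    have h2 := mul_nonneg hc.le (sq_nonneg ‖s k - s (k+1) - (s (k+1) - s (k+1+1))‖)
    linarith
  have hko := o_inv hDn hDstep hc V hVn hVstep
  have hVa : ∀ k, V k ≤ V 0 := fun k => by
    induction k with
    | zero => exact le_rfl
    | succ k ih =>
      have := hVstep k; have := mul_nonneg hc.le (hDn k); linarith
  have hDa : ∀ k, D k ≤ D 0 := fun k => by
    induction k with
    | zero => exact le_rfl
    | succ k ih => exact (hDstep k).trans ih
  have hxb : ∀ k, ‖x (k+1) - xstar‖ ≤ γ * √(V 0) := by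
    intro k
    have h1 := hrm k
    rw [inner_sub_left, inner_smul_left, real_inner_self_eq_norm_sq] at h1
    simp only [conj_trivial] at h1
    have h2 := real_inner_le_norm (s k - ss) (x (k+1) - xstar)
    have h3 : ‖s k - ss‖ ≤ √(V 0) := by
      apply Real.le_sqrt_of_sq_le
      have := hVa k
      rw [hV k] at this
      have := hMnn (u k - hstar)
      linarith
    by_cases h0 : ‖x (k+1) - xstar‖ = 0
    · rw [h0]; positivity
    have hpos : 0 < ‖x (k+1) - xstar‖ := lt_of_le_of_ne (norm_nonneg _) (Ne.symm h0)
    have h4 : (1/γ * ‖x (k+1) - xstar‖) * ‖x (k+1) - xstar‖ ≤ ‖s k - ss‖ * ‖x (k+1) - xstar‖ := by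
      linarith
    have h5 := le_of_mul_le_mul_right h4 hpos
    rw [one_div, inv_mul_eq_div, div_le_iff₀ hγ0] at h5
    have h6 := mul_le_mul_of_nonneg_right h3 hγ0.le
    linarith
  have hsD : ∀ k, ‖s k - s (k+1)‖ ≤ √(D k) := by
    intro k
    apply Real.le_sqrt_of_sq_le
    rw [hD k]
    have := hMnn (u k - u (k+1))
    linarith
  obtain ⟨c0, hc0⟩ : ∃ c0 : ℝ, c0 = γ * (√η + ‖K‖) := ⟨_, rfl⟩
  have hc0n : 0 ≤ c0 := by rw [hc0]; positivity
  have hPK : ∀ k, ‖P k - K (x (k+1))‖ ≤ c0 * √(D k) := by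
    intro k
    have e : P k - K (x (k+1)) = γ • ((η • (u k - u (k+1)) - K (A (u k - u (k+1))))
        - K (s k - s (k+1))) := by
      rw [hP, hqs, hqs]
      simp only [map_sub, map_add]
      module
    have h1 : ‖η • (u k - u (k+1)) - K (A (u k - u (k+1)))‖ ≤ √η * √(D k) := by
      rw [← Real.sqrt_mul hη0.le]
      apply Real.le_sqrt_of_sq_le
      refine (hMle _).trans (mul_le_mul_of_nonneg_left ?_ hη0.le)
      rw [hD k]
      have := sq_nonneg ‖s k - s (k+1)‖
      linarith
    have h2 : ‖K (s k - s (k+1))‖ ≤ ‖K‖ * √(D k) :=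
      (K.le_opNorm _).trans (mul_le_mul_of_nonneg_left (hsD k) (norm_nonneg _))
    rw [e, norm_smul, Real.norm_eq_abs, abs_of_pos hγ0, hc0, mul_assoc]
    apply mul_le_mul_of_nonneg_left _ hγ0.le
    refine (norm_sub_le _ _).trans ?_
    linarith
  have hKx : ∀ k, ‖K (x (k+1))‖ ≤ ‖K‖ * (γ * √(V 0) + ‖xstar‖) := by
    intro k
    refine (K.le_opNorm _).trans (mul_le_mul_of_nonneg_left ?_ (norm_nonneg _))
    have h1 := norm_add_le (x (k+1) - xstar) xstar
    rw [sub_add_cancel] at h1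
    have := hxb k
    linarith
  have hDb : ∀ k, c0 * √(D k) ≤ c0 * √(D 0) := fun k =>
    mul_le_mul_of_nonneg_left (Real.sqrt_le_sqrt (hDa k)) hc0n
  obtain ⟨C, hC0, hC1, hC2⟩ := convex_lip hHconv
    (‖K‖ * (γ * √(V 0) + ‖xstar‖) + c0 * √(D 0))
  have hPb : ∀ k, ‖P k‖ ≤ ‖K‖ * (γ * √(V 0) + ‖xstar‖) + c0 * √(D 0) := by
    intro k
    have h1 := norm_add_le (P k - K (x (k+1))) (K (x (k+1)))
    rw [sub_add_cancel] at h1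
    have := hPK k
    have := hDb k
    have := hKx k
    linarith
  have hKxb : ∀ k, ‖K (x (k+1))‖ ≤ ‖K‖ * (γ * √(V 0) + ‖xstar‖) + c0 * √(D 0) := by
    intro k
    have := hKx k
    have : 0 ≤ c0 * √(D 0) := by positivity
    linarith
  have hub : ∀ k, F (x (k+1)) + R (x (k+1)) + H (K (x (k+1))) - (F xstar + R xstar + H (K xstar))
      ≤ (γ * √(V 0) + 2 * C * c0) * √(D k) := by
    intro k
    have h1 := grad_subgrad hFconv hFgrad (x (k+1)) xstar
    have h2 := hr k xstar
    have h3 := hp k (K xstar)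
    have h4 := hC1 _ _ (hKxb k) (hPb k)
    rw [norm_sub_rev] at h4
    have h5 := real_inner_le_norm (u (k+1)) (P k - K (x (k+1)))
    have h6 := real_inner_le_norm (s k - s (k+1)) (x (k+1) - xstar)
    have h7 : ‖u (k+1)‖ * ‖P k - K (x (k+1))‖ ≤ C * (c0 * √(D k)) :=
      mul_le_mul (hC2 _ _ (hPb k) (hp k)) (hPK k) (norm_nonneg _) hC0
    have h8 : C * ‖P k - K (x (k+1))‖ ≤ C * (c0 * √(D k)) :=
      mul_le_mul_of_nonneg_left (hPK k) hC0
    have h9 : ‖s k - s (k+1)‖ * ‖x (k+1) - xstar‖ ≤ √(D k) * (γ * √(V 0)) :=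
      mul_le_mul (hsD k) (hxb k) (norm_nonneg _) (Real.sqrt_nonneg _)
    have e1 : ⟪F' (x (k+1)), xstar - x (k+1)⟫ + ⟪s k - (1/γ) • x (k+1), xstar - x (k+1)⟫
        + ⟪u (k+1), K xstar - P k⟫ = - ⟪s k - s (k+1), x (k+1) - xstar⟫
          - ⟪u (k+1), P k - K (x (k+1))⟫ := by
      have e2 : K xstar - P k = K (xstar - x (k+1)) - (P k - K (x (k+1))) := by
        rw [map_sub]; abel
      have e3 : s k - s (k+1) = F' (x (k+1)) + (s k - (1/γ) • x (k+1)) + A (u (k+1)) := by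
        rw [hs (k+1), hq k]; abel
      rw [e2, inner_sub_right (u (k+1)), ← ContinuousLinearMap.adjoint_inner_left K, e3,
        ← neg_sub xstar (x (k+1)), inner_neg_right, inner_add_left, inner_add_left]
      ring
    linarith
  have hlb : ∀ k, 0 ≤ F (x (k+1)) + R (x (k+1)) + H (K (x (k+1)))
      - (F xstar + R xstar + H (K xstar)) := by
    intro k
    have h1 := grad_subgrad hFconv hFgrad xstar (x (k+1))
    have h2 := hrstar (x (k+1))
    have h3 := hhstar (K (x (k+1)))
    rw [← map_sub, ← ContinuousLinearMap.adjoint_inner_left K] at h3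
    have h4 : ⟪F' xstar + rstar + A hstar, x (k+1) - xstar⟫ = 0 := by rw [hopt, inner_zero_left]
    rw [inner_add_left, inner_add_left] at h4
    linarith
  rw [← tendsto_add_atTop_iff_nat 1]
  refine squeeze_zero (fun k => mul_nonneg (Real.sqrt_nonneg _) (hlb k))
    (g := fun k : ℕ => (γ * √(V 0) + 2 * C * c0) * √(((k:ℝ) + 1) * D k)) (fun k => ?_) ?_
  · have := mul_le_mul_of_nonneg_left (hub k) (Real.sqrt_nonneg ((k:ℝ) + 1))
    rw [Real.sqrt_mul (by positivity)]
    push_cast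
    linarith
  · have := (Real.continuous_sqrt.tendsto 0).comp hko
    rw [Real.sqrt_zero] at this
    simpa using this.const_mul (γ * √(V 0) + 2 * C * c0)

/-- Theorem 1(i): `o(1/√k)` rate of the PD3O algorithm with constant stepsize. -/
theorem pd3o_rate_little_o_inv_sqrt
    {𝒳 𝒰 : Type*}
    [NormedAddCommGroup 𝒳] [InnerProductSpace ℝ 𝒳] [FiniteDimensional ℝ 𝒳]
    [NormedAddCommGroup 𝒰] [InnerProductSpace ℝ 𝒰] [FiniteDimensional ℝ 𝒰]
    (K : 𝒳 →L[ℝ] 𝒰)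
    (F R : 𝒳 → ℝ) (H : 𝒰 → ℝ) (F' : 𝒳 → 𝒳) (L_F : ℝ)
    (hLF : 0 < L_F)
    (hFconv : ConvexOn ℝ Set.univ F)
    (hRconv : ConvexOn ℝ Set.univ R)
    (hHconv : ConvexOn ℝ Set.univ H)
    (hFgrad : ∀ z, HasGradientAt F (F' z) z)
    (hFlip : ∀ z z', ‖F' z - F' z'‖ ≤ L_F * ‖z - z'‖)
    -- Assumption 1: existence of a primal-dual solution
    (xstar : 𝒳) (rstar : 𝒳) (hstar : 𝒰)
    (hrstar : IsSubgradientAt R xstar rstar)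
    (hhstar : IsSubgradientAt H (K xstar) hstar)
    (hopt : F' xstar + rstar + (ContinuousLinearMap.adjoint K) hstar = 0)
    -- parameters
    (γ η : ℝ) (hγ0 : 0 < γ) (hγ2 : γ < 2 / L_F) (hη : ‖K‖ ^ 2 ≤ η)
    -- PD3O iterates
    (x q : ℕ → 𝒳) (u : ℕ → 𝒰)
    (hx : ∀ k, IsProxPt γ R
      (γ • (q k - (ContinuousLinearMap.adjoint K) (u k))) (x (k+1)))
    (hq : ∀ k, q (k+1) = (1/γ) • x (k+1) - F' (x (k+1)))
    (hu : ∀ k, ∃ p, IsProxPt (γ*η) H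
        ((γ*η) • (u k + (1/η) • K ((1/γ) • x (k+1) + q (k+1) - q k))) p ∧
      u (k+1) = (u k + (1/η) • K ((1/γ) • x (k+1) + q (k+1) - q k))
        - (1/(γ*η)) • p) :
    Tendsto (fun k : ℕ => Real.sqrt k *
      ((F (x k) + R (x k) + H (K (x k))) - (F xstar + R xstar + H (K xstar))))
      atTop (𝓝 0) := by
  have hη0 : 0 ≤ η := (sq_nonneg _).trans hη
  rcases hη0.lt_or_eq with h | h
  · exact pd3o_aux K F R H F' L_F hLF hFconv hRconv hHconv hFgrad hFlip xstar rstar hstar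
      hrstar hhstar hopt γ η h hγ0 hγ2 hη x q u hx hq hu
  · -- degenerate case: `η = 0` forces `K = 0`
    have hK : K = 0 := by
      rw [← h] at hη
      exact norm_eq_zero.1 (pow_eq_zero_iff (two_ne_zero) |>.1 (le_antisymm hη (sq_nonneg _)))
    subst hK
    have := pd3o_aux (0 : 𝒳 →L[ℝ] 𝒰) F R (fun _ => 0) F' L_F hLF hFconv hRconv
      (convexOn_const 0 convex_univ) hFgrad hFlip xstar rstar 0 hrstar
      (fun y => by simp) (by simpa using hopt) γ 1 one_pos hγ0 hγ2 (by simp) x q (fun _ => 0)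
      (fun k => by simpa using hx k) hq
      (fun k => ⟨0, fun y => by simp; positivity, by simp⟩)
    simpa using this
end
end

section
/- Theorem 1(iii), o(1/k) best-iterate rate of the PD3O algorithm for smooth H: Suppose the stepsizes are constant, γ_k ≡ γ ∈ (0, 2/L_F), η ≥ ‖K‖², and in addition H is differentiable with L-Lipschitz gradient for some L > 0. Then min_{i=1,…,k} Ψ(x^i) − Ψ(x*) = o(1/k); that is, k · (min_{i=1,…,k} Ψ(x^i) − Ψ(x*)) → 0 as k → ∞. -/
open Filter Topology RealInnerProductSpace

noncomputable section

theorem aux_line {E : Type*} [NormedAddCommGroup E] [InnerProductSpace ℝ E] [CompleteSpace E]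
    {G : E → ℝ} {G' : E → E} (hG : ∀ z, HasGradientAt G (G' z) z) (x d : E) (t : ℝ) :
    HasDerivAt (fun s : ℝ => G (x + s • d)) ⟪G' (x + t • d), d⟫ t := by
  have h1 : HasDerivAt (fun s : ℝ => x + s • d) d t := by
    simpa using ((hasDerivAt_id t).smul_const d).const_add x
  have h2 := (hG (x + t • d)).hasFDerivAt.comp_hasDerivAt t h1
  exact h2.congr_deriv (by simp)

theorem aux_convex {E : Type*} [NormedAddCommGroup E] [InnerProductSpace ℝ E] [CompleteSpace E]
    {G : E → ℝ} {G' : E → E} (hc : ConvexOn ℝ Set.univ G)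
    (hG : ∀ z, HasGradientAt G (G' z) z) (x y : E) :
    G x + ⟪G' x, y - x⟫ ≤ G y := by
  have h1 := aux_line hG x (y - x) 0
  have h2 : ConvexOn ℝ Set.univ (fun s : ℝ => G (x + s • (y - x))) := by
    refine ⟨convex_univ, fun a _ b _ s t hs ht hst => ?_⟩
    have := hc.2 (Set.mem_univ (x + a • (y - x))) (Set.mem_univ (x + b • (y - x))) hs ht hst
    convert this using 2
    have : s • (x + a • (y - x)) + t • (x + b • (y - x))
      = (s + t) • x + (s • a + t • b) • (y - x) := by
      simp only [smul_eq_mul]; module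
    rw [this, hst, one_smul]
  have h3 := h2.le_slope_of_hasDerivAt (Set.mem_univ 0) (Set.mem_univ 1) one_pos h1
  simp [slope_def_field] at h3
  linarith

theorem aux_descent {E : Type*} [NormedAddCommGroup E] [InnerProductSpace ℝ E] [CompleteSpace E]
    {G : E → ℝ} {G' : E → E} {L : ℝ}
    (hG : ∀ z, HasGradientAt G (G' z) z)
    (hl : ∀ z z', ‖G' z - G' z'‖ ≤ L * ‖z - z'‖) (x y : E) :
    G y ≤ G x + ⟪G' x, y - x⟫ + L / 2 * ‖y - x‖ ^ 2 := by
  set d := y - x with hd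
  have hder : ∀ t : ℝ, HasDerivAt
      (fun s : ℝ => G (x + s • d) - s * ⟪G' x, d⟫ - L / 2 * ‖d‖ ^ 2 * s ^ 2)
      (⟪G' (x + t • d), d⟫ - ⟪G' x, d⟫ - L * ‖d‖ ^ 2 * t) t := by
    intro t
    have h := ((aux_line hG x d t).sub ((hasDerivAt_id t).mul_const ⟪G' x, d⟫)).sub
      (((hasDerivAt_id t).pow 2).const_mul (L / 2 * ‖d‖ ^ 2))
    refine h.congr_deriv ?_
    simp
    ring
  have hanti : AntitoneOn
      (fun s : ℝ => G (x + s • d) - s * ⟪G' x, d⟫ - L / 2 * ‖d‖ ^ 2 * s ^ 2) (Set.Ici 0) := by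
    apply antitoneOn_of_deriv_nonpos (convex_Ici 0)
    · exact fun t _ => (hder t).continuousAt.continuousWithinAt
    · exact fun t _ => (hder t).differentiableAt.differentiableWithinAt
    · intro t ht
      rw [interior_Ici] at ht
      have ht : 0 < t := ht
      rw [(hder t).deriv]
      have h1 : ⟪G' (x + t • d) - G' x, d⟫ ≤ ‖G' (x + t • d) - G' x‖ * ‖d‖ :=
        real_inner_le_norm _ _
      have h2 := hl (x + t • d) x
      rw [add_sub_cancel_left, norm_smul, Real.norm_of_nonneg ht.le] at h2
      have h3 := mul_le_mul_of_nonneg_right h2 (norm_nonneg d)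
      rw [inner_sub_left] at h1
      nlinarith
  have h := hanti (Set.mem_Ici.2 le_rfl) (Set.mem_Ici.2 zero_le_one) zero_le_one
  simp [hd] at h
  rw [← hd] at h
  linarith

theorem aux_coco {E : Type*} [NormedAddCommGroup E] [InnerProductSpace ℝ E] [CompleteSpace E]
    {G : E → ℝ} {G' : E → E} {L : ℝ} (hL : 0 < L) (hc : ConvexOn ℝ Set.univ G)
    (hG : ∀ z, HasGradientAt G (G' z) z)
    (hl : ∀ z z', ‖G' z - G' z'‖ ≤ L * ‖z - z'‖) (x y : E) :
    ‖G' x - G' y‖ ^ 2 ≤ L * ⟪G' x - G' y, x - y⟫ := by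
  have key : ∀ x y : E, G x + ⟪G' x, y - x⟫ + 1 / (2 * L) * ‖G' x - G' y‖ ^ 2 ≤ G y := by
    intro x y
    set g := G' y - G' x with hg
    have h1 := aux_convex hc hG x (y - (1 / L) • g)
    have h2 := aux_descent hG hl y (y - (1 / L) • g)
    have e1 : y - (1 / L) • g - x = (y - x) - (1 / L) • g := by abel
    have e2 : y - (1 / L) • g - y = - ((1 / L) • g) := by abel
    rw [e1, inner_sub_right, real_inner_smul_right] at h1
    rw [e2, inner_neg_right, real_inner_smul_right, norm_neg, norm_smul, mul_pow,
      Real.norm_of_nonneg (by positivity)] at h2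
    have e3 : ⟪G' y, g⟫ - ⟪G' x, g⟫ = ‖g‖ ^ 2 := by
      rw [← inner_sub_left, ← hg, real_inner_self_eq_norm_sq]
    have e4 : ‖G' x - G' y‖ = ‖g‖ := by rw [hg, norm_sub_rev]
    have e5 : L / 2 * ((1 / L) ^ 2 * ‖g‖ ^ 2) = 1 / (2 * L) * ‖g‖ ^ 2 := by field_simp
    have e6 : 1 / L * ⟪G' y, g⟫ - 1 / L * ⟪G' x, g⟫ = 2 * (1 / (2 * L) * ‖g‖ ^ 2) := by
      rw [← mul_sub, e3]; field_simp
    rw [e4]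
    linarith
  have h1 := key x y
  have h2 := key y x
  have e : ⟪G' x - G' y, x - y⟫ = -⟪G' x, y - x⟫ - ⟪G' y, x - y⟫ := by
    rw [inner_sub_left, ← neg_sub y x, inner_neg_right, inner_neg_right]
  rw [norm_sub_rev (G' y)] at h2
  have h3 : 2 * (1 / (2 * L) * ‖G' x - G' y‖ ^ 2) ≤ ⟪G' x - G' y, x - y⟫ := by linarith
  have h4 : L * (2 * (1 / (2 * L) * ‖G' x - G' y‖ ^ 2)) = ‖G' x - G' y‖ ^ 2 := by field_simp
  rw [← h4]
  exact mul_le_mul_of_nonneg_left h3 hL.le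

theorem aux_subgrad {E : Type*} [NormedAddCommGroup E] [InnerProductSpace ℝ E] [CompleteSpace E]
    {G : E → ℝ} {G' : E → E} (hG : ∀ z, HasGradientAt G (G' z) z) {z u : E}
    (h : IsSubgradientAt G z u) : u = G' z := by
  have h1 := aux_line hG z (u - G' z) 0
  have h2 : HasDerivAt (fun s : ℝ => G (z + s • (u - G' z)) - s * ⟪u, u - G' z⟫)
      (⟪G' (z + (0:ℝ) • (u - G' z)), u - G' z⟫ - 1 * ⟪u, u - G' z⟫) 0 :=
    h1.sub ((hasDerivAt_id (0:ℝ)).mul_const _)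
  have h3 : IsLocalMin (fun s : ℝ => G (z + s • (u - G' z)) - s * ⟪u, u - G' z⟫) 0 := by
    refine Filter.Eventually.of_forall fun s => ?_
    have := h (z + s • (u - G' z))
    rw [add_sub_cancel_left, real_inner_smul_right] at this
    simp
    linarith
  have h4 := h3.hasDerivAt_eq_zero h2
  rw [zero_smul, add_zero, one_mul, ← inner_sub_left, ← neg_sub u, inner_neg_left,
    real_inner_self_eq_norm_sq] at h4
  have : ‖u - G' z‖ = 0 := by nlinarith
  exact sub_eq_zero.1 (norm_eq_zero.1 this)

theorem aux_prox {E : Type*} [NormedAddCommGroup E] [InnerProductSpace ℝ E]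
    {G : E → ℝ} (hc : ConvexOn ℝ Set.univ G) {σ : ℝ} (hσ : 0 < σ) {v p : E}
    (h : IsProxPt σ G (σ • v) p) : IsSubgradientAt G p (v - (1 / σ) • p) := by
  intro y
  have hs : ∀ s : ℝ, 0 < s → s ≤ 1 →
      σ * (G p - G y) + ⟪σ • v - p, y - p⟫ ≤ s * (‖y - p‖ ^ 2 / 2) := by
    intro s hs hs1
    have h1 := h (p + s • (y - p))
    have h2 := hc.2 (Set.mem_univ p) (Set.mem_univ y) (sub_nonneg.2 hs1) hs.le (by ring)
    have e1 : (1 - s) • p + s • y = p + s • (y - p) := by module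
    rw [e1] at h2
    simp only [smul_eq_mul] at h2
    have e2 : p + s • (y - p) - σ • v = s • (y - p) - (σ • v - p) := by abel
    rw [e2, norm_sub_sq_real (s • (y - p)), real_inner_smul_left, norm_smul, Real.norm_of_nonneg hs.le,
      norm_sub_rev p, mul_pow, real_inner_comm (σ • v - p) (y - p)] at h1
    have h3 := mul_le_mul_of_nonneg_left h2 hσ.le
    refine le_of_mul_le_mul_left ?_ hs
    nlinarith
  have h0 : σ * (G p - G y) + ⟪σ • v - p, y - p⟫ ≤ 0 := by
    by_contra hcon
    push Not at hcon
    set A := σ * (G p - G y) + ⟪σ • v - p, y - p⟫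
    set B := ‖y - p‖ ^ 2 / 2
    have hB : 0 ≤ B := by positivity
    have h1 := hs (min 1 (A / (B + 1))) (by positivity) (min_le_left _ _)
    have h2 : min 1 (A / (B + 1)) * B ≤ A / (B + 1) * B :=
      mul_le_mul_of_nonneg_right (min_le_right _ _) hB
    have h3 : A / (B + 1) * B < A := by
      rw [div_mul_eq_mul_div, div_lt_iff₀ (by positivity)]
      nlinarith
    linarith
  have e : v - (1 / σ) • p = (1 / σ) • (σ • v - p) := by
    rw [smul_sub, smul_smul, one_div_mul_cancel hσ.ne', one_smul]
  rw [e, real_inner_smul_left]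
  have h4 : 1 / σ * (σ * (G p - G y) + ⟪σ • v - p, y - p⟫) ≤ 0 :=
    mul_nonpos_of_nonneg_of_nonpos (by positivity) h0
  rw [mul_add, ← mul_assoc, one_div_mul_cancel hσ.ne', one_mul] at h4
  linarith

theorem aux_telescope {D φ : ℕ → ℝ} {c : ℝ} (hc : 0 < c) (hD : ∀ k, 0 ≤ D k)
    (hφ : ∀ k, 0 ≤ φ k) (h : ∀ k, c * D k ≤ φ k - φ (k + 1)) : Summable D := by
  have hs : Summable (fun k => c * D k) := by
    refine summable_of_sum_range_le (c := φ 0) (fun k => mul_nonneg hc.le (hD k)) fun n => ?_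
    have : ∑ i ∈ Finset.range n, c * D i ≤ ∑ i ∈ Finset.range n, (φ i - φ (i + 1)) :=
      Finset.sum_le_sum fun i _ => h i
    rw [Finset.sum_range_sub'] at this
    linarith [hφ n]
  exact (summable_mul_left_iff hc.ne').1 hs

theorem aux_rate {a : ℕ → ℝ} {m : ℝ} (h0 : ∀ k, 0 ≤ a (k + 1) - m)
    (hs : Summable (fun k => a (k + 1) - m))
    (hne : ∀ k : ℕ, (Finset.Icc 1 (k+1)).Nonempty) :
    Tendsto (fun k : ℕ => ((k : ℝ) + 1) *
      ((Finset.Icc 1 (k+1)).inf' (hne k) a - m)) atTop (𝓝 0) := by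
  set b := fun k => a (k + 1) - m with hb
  have ht : Tendsto (fun k : ℕ => ∑' i, b (i + k / 2)) atTop (𝓝 0) :=
    (tendsto_sum_nat_add b).comp (Nat.tendsto_div_const_atTop (by norm_num))
  have ht2 : Tendsto (fun k : ℕ => 2 * ∑' i, b (i + k / 2)) atTop (𝓝 0) := by
    simpa using ht.const_mul 2
  refine squeeze_zero (fun k => ?_) (fun k => ?_) ht2
  · refine mul_nonneg (by positivity) (sub_nonneg.2 ?_)
    refine Finset.le_inf' _ _ fun i hi => ?_
    obtain ⟨h1, h2⟩ := Finset.mem_Icc.1 hi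
    obtain ⟨j, rfl⟩ : ∃ j, i = j + 1 := ⟨i - 1, by omega⟩
    linarith [h0 j]
  · set I := (Finset.Icc 1 (k+1)).inf' (hne k) a
    have hI : ∀ j, j ≤ k → I - m ≤ b j := fun j hj =>
      sub_le_sub_right (Finset.inf'_le a (Finset.mem_Icc.2 ⟨by omega, by omega⟩)) m
    have hIn : 0 ≤ I - m := by
      refine sub_nonneg.2 (Finset.le_inf' _ _ fun i hi => ?_)
      obtain ⟨h1, h2⟩ := Finset.mem_Icc.1 hi
      obtain ⟨j, rfl⟩ : ∃ j, i = j + 1 := ⟨i - 1, by omega⟩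
      linarith [h0 j]
    have hsum : ∑ i ∈ Finset.range (k + 1 - k / 2), b (i + k / 2) ≤ ∑' i, b (i + k / 2) :=
      ((summable_nat_add_iff (k / 2)).2 hs).sum_le_tsum _ (fun i _ => h0 _)
    have hcard : ((k + 1 - k / 2 : ℕ) : ℝ) * (I - m)
        ≤ ∑ i ∈ Finset.range (k + 1 - k / 2), b (i + k / 2) := by
      have := Finset.card_nsmul_le_sum (Finset.range (k + 1 - k / 2)) (fun i => b (i + k / 2))
        (I - m) (fun i hi => hI _ (by have := Finset.mem_range.1 hi; omega))
      simpa [nsmul_eq_mul] using this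
    have hk : ((k : ℝ) + 1) ≤ 2 * ((k + 1 - k / 2 : ℕ) : ℝ) := by
      have : k + 1 ≤ 2 * (k + 1 - k / 2) := by omega
      exact_mod_cast this
    have := mul_le_mul_of_nonneg_right hk hIn
    linarith

theorem aux_id {𝒳 𝒰 : Type*}
    [NormedAddCommGroup 𝒳] [InnerProductSpace ℝ 𝒳] [CompleteSpace 𝒳]
    [NormedAddCommGroup 𝒰] [InnerProductSpace ℝ 𝒰] [CompleteSpace 𝒰]
    (K : 𝒳 →L[ℝ] 𝒰) {γ η : ℝ} (hγ : 0 < γ) (q q1 x f r : 𝒳) (u u1 p : 𝒰)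
    (hr : r = q - (ContinuousLinearMap.adjoint K) u - (1/γ) • x)
    (hf : f = (1/γ) • x - q1)
    (hp : p = (γ*η) • (u - u1) + K x + γ • K (q1 - q)) :
    ⟪r, x⟫ + ⟪f, x⟫ + ⟪u1, p⟫ = γ *
      ((‖q - (ContinuousLinearMap.adjoint K) u‖ ^ 2 / 2
          + (η * ‖u‖ ^ 2 - ‖(ContinuousLinearMap.adjoint K) u‖ ^ 2) / 2)
        - (‖q1 - (ContinuousLinearMap.adjoint K) u1‖ ^ 2 / 2
          + (η * ‖u1‖ ^ 2 - ‖(ContinuousLinearMap.adjoint K) u1‖ ^ 2) / 2)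
        - ‖(q - (ContinuousLinearMap.adjoint K) u) - (q1 - (ContinuousLinearMap.adjoint K) u1)‖ ^ 2 / 2
        - (η * ‖u - u1‖ ^ 2 - ‖(ContinuousLinearMap.adjoint K) (u - u1)‖ ^ 2) / 2
        + ⟪(q - (ContinuousLinearMap.adjoint K) u) - (q1 - (ContinuousLinearMap.adjoint K) u1), f⟫) := by
  have hx : x = γ • (q1 + f) := by
    rw [hf, add_sub_cancel, smul_smul, mul_one_div_cancel hγ.ne', one_smul]
  have hr' : r = q - (ContinuousLinearMap.adjoint K) u - q1 - f := by
    rw [hr, hf]; abel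
  have hu : ⟪u1, p⟫ = γ * η * (⟪u1, u⟫ - ⟪u1, u1⟫) + ⟪(ContinuousLinearMap.adjoint K) u1, x⟫
      + γ * (⟪(ContinuousLinearMap.adjoint K) u1, q1⟫ - ⟪(ContinuousLinearMap.adjoint K) u1, q⟫) := by
    rw [hp, inner_add_right, inner_add_right, real_inner_smul_right, real_inner_smul_right,
      inner_sub_right, ← ContinuousLinearMap.adjoint_inner_left,
      ← ContinuousLinearMap.adjoint_inner_left, inner_sub_right]
  rw [hu, hr', hx, map_sub]
  generalize (ContinuousLinearMap.adjoint K) u = a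
  generalize (ContinuousLinearMap.adjoint K) u1 = b
  simp only [← real_inner_self_eq_norm_sq, inner_add_right, inner_sub_left,
    inner_sub_right, real_inner_smul_right]
  rw [real_inner_comm q q1, real_inner_comm u u1, real_inner_comm a q, real_inner_comm b q,
    real_inner_comm a q1, real_inner_comm b q1, real_inner_comm a b, real_inner_comm f q1]
  ring

theorem aux_core {𝒳 𝒰 : Type*}
    [NormedAddCommGroup 𝒳] [InnerProductSpace ℝ 𝒳] [CompleteSpace 𝒳]
    [NormedAddCommGroup 𝒰] [InnerProductSpace ℝ 𝒰] [CompleteSpace 𝒰]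
    (K : 𝒳 →L[ℝ] 𝒰)
    (F R : 𝒳 → ℝ) (H : 𝒰 → ℝ) (F' : 𝒳 → 𝒳) (L_F : ℝ)
    (hLF : 0 < L_F)
    (hFconv : ConvexOn ℝ Set.univ F)
    (hHconv : ConvexOn ℝ Set.univ H)
    (hFgrad : ∀ z, HasGradientAt F (F' z) z)
    (hFlip : ∀ z z', ‖F' z - F' z'‖ ≤ L_F * ‖z - z'‖)
    (H' : 𝒰 → 𝒰) (L : ℝ) (hL : 0 < L)
    (hHgrad : ∀ v, HasGradientAt H (H' v) v)
    (hHlip : ∀ v v', ‖H' v - H' v'‖ ≤ L * ‖v - v'‖)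
    (xs rs : 𝒳) (us : 𝒰)
    (hrs : IsSubgradientAt R xs rs)
    (hus : us = H' (K xs))
    (hopt : F' xs + rs + (ContinuousLinearMap.adjoint K) us = 0)
    (γ η : ℝ) (hγ0 : 0 < γ) (hγ2 : γ < 2 / L_F) (hη : ‖K‖ ^ 2 ≤ η)
    (x q : ℕ → 𝒳) (u p : ℕ → 𝒰)
    (hx : ∀ k, IsSubgradientAt R (x (k+1))
      (q k - (ContinuousLinearMap.adjoint K) (u k) - (1/γ) • x (k+1)))
    (hq : ∀ k, q (k+1) = (1/γ) • x (k+1) - F' (x (k+1)))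
    (hu : ∀ k, u (k+1) = H' (p k))
    (hp : ∀ k, p k = (γ*η) • (u k - u (k+1)) + K (x (k+1)) + γ • K (q (k+1) - q k)) :
    Summable (fun k => F (x (k+1)) + R (x (k+1)) + H (K (x (k+1)))
        - (F xs + R xs + H (K xs))) := by
  set A := ContinuousLinearMap.adjoint K with hA
  set qs : 𝒳 := (1/γ) • xs - F' xs with hqs
  have hrs' : rs = qs - A us - (1/γ) • xs := by
    have : rs = - F' xs - A us := by
      rw [← sub_eq_zero, ← hopt]; abel
    rw [this, hqs]; abel
  set a : ℕ → ℝ := fun k => ⟪(q k - A (u k) - (1/γ) • x (k+1)) - rs, x (k+1) - xs⟫ with ha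
  set b : ℕ → ℝ := fun k => ⟪F' (x (k+1)) - F' xs, x (k+1) - xs⟫ with hb
  set c : ℕ → ℝ := fun k => ⟪u (k+1) - us, p k - K xs⟫ with hc
  set w : ℕ → 𝒳 := fun k => (q k - qs) - A (u k - us) with hw
  set φ : ℕ → ℝ := fun k => ‖w k‖ ^ 2 / 2 + (η * ‖u k - us‖ ^ 2 - ‖A (u k - us)‖ ^ 2) / 2 with hφ
  have hM : ∀ v, 0 ≤ η * ‖v‖ ^ 2 - ‖A v‖ ^ 2 := by
    intro v
    have h1 : ‖A v‖ ≤ ‖K‖ * ‖v‖ := by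
      have := A.le_opNorm v
      rwa [hA, LinearIsometryEquiv.norm_map] at this
    have h2 : ‖A v‖ ^ 2 ≤ (‖K‖ * ‖v‖) ^ 2 := pow_le_pow_left₀ (norm_nonneg _) h1 2
    rw [mul_pow] at h2
    have h3 := mul_le_mul_of_nonneg_right hη (sq_nonneg ‖v‖)
    linarith
  have hφ0 : ∀ k, 0 ≤ φ k := fun k => by
    have := hM (u k - us)
    simp only [hφ]; positivity
  have ha0 : ∀ k, 0 ≤ a k := by
    intro k
    have h1 := hx k xs
    have h2 := hrs (x (k+1))
    rw [← neg_sub (x (k+1)) xs, inner_neg_right] at h1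
    simp only [ha]; rw [inner_sub_left]; linarith
  have hb0 : ∀ k, ‖F' (x (k+1)) - F' xs‖ ^ 2 ≤ L_F * b k := fun k =>
    aux_coco hLF hFconv hFgrad hFlip _ _
  have hc0 : ∀ k, ‖u (k+1) - us‖ ^ 2 ≤ L * c k := fun k => by
    have := aux_coco hL hHconv hHgrad hHlip (p k) (K xs)
    rwa [← hu, ← hus] at this
  have hbn : ∀ k, 0 ≤ b k := fun k => nonneg_of_mul_nonneg_right ((sq_nonneg _).trans (hb0 k)) hLF
  have hcn : ∀ k, 0 ≤ c k := fun k => nonneg_of_mul_nonneg_right ((sq_nonneg _).trans (hc0 k)) hL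
  have hid : ∀ k, a k + b k + c k = γ * (φ k - φ (k+1) - ‖w k - w (k+1)‖ ^ 2 / 2
      - (η * ‖(u k - us) - (u (k+1) - us)‖ ^ 2 - ‖A ((u k - us) - (u (k+1) - us))‖ ^ 2) / 2
      + ⟪w k - w (k+1), F' (x (k+1)) - F' xs⟫) := by
    intro k
    refine aux_id K hγ0 (q k - qs) (q (k+1) - qs) (x (k+1) - xs) (F' (x (k+1)) - F' xs)
      ((q k - A (u k) - (1/γ) • x (k+1)) - rs) (u k - us) (u (k+1) - us) (p k - K xs) ?_ ?_ ?_
    · rw [hrs', map_sub, smul_sub]; abel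
    · rw [hq, hqs, smul_sub]; abel
    · rw [hp, map_sub K (x (k+1)) xs, sub_sub_sub_cancel_right, sub_sub_sub_cancel_right]; abel
  -- the Lyapunov inequality
  have hθ : γ * L_F < 2 := (lt_div_iff₀ hLF).1 hγ2
  have hθ0 : 0 < γ * L_F := mul_pos hγ0 hLF
  have hDs : ∃ c0 : ℝ, 0 < c0 ∧ ∀ k,
      c0 * (a k + b k + c k + ‖w k - w (k+1)‖ ^ 2) ≤ φ k - φ (k+1) := by
    set θ := γ * L_F / 2 with hθd
    have hθ1 : θ < 1 := by linarith
    have hθp : 0 < θ := by positivity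
    set s := (1 + θ) / 2 with hs
    have hs0 : 0 < s := by positivity
    have hs1 : s < 1 := by linarith
    have hts : θ / s < 1 := by rw [div_lt_one hs0]; linarith
    refine ⟨min ((1 - θ / s) / γ) ((1 - s) / 2), lt_min (div_pos (by linarith) hγ0) (by linarith),
      fun k => ?_⟩
    set m := min ((1 - θ / s) / γ) ((1 - s) / 2) with hm
    have hm1 : m ≤ (1 - θ / s) / γ := min_le_left _ _
    have hm2 : m ≤ (1 - s) / 2 := min_le_right _ _
    set g := F' (x (k+1)) - F' xs with hg
    set d := w k - w (k+1) with hd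
    have h1 : ⟪d, g⟫ ≤ s / 2 * ‖d‖ ^ 2 + 1 / (2 * s) * ‖g‖ ^ 2 := by
      have h2 := real_inner_le_norm d g
      have h3 : 0 ≤ (s * ‖d‖ - ‖g‖) ^ 2 / (2 * s) := by positivity
      have h4 : (s * ‖d‖ - ‖g‖) ^ 2 / (2 * s)
        = s / 2 * ‖d‖ ^ 2 + 1 / (2 * s) * ‖g‖ ^ 2 - ‖d‖ * ‖g‖ := by field_simp; ring
      linarith
    have h5 : 1 / (2 * s) * ‖g‖ ^ 2 ≤ θ / s * (b k / γ) := by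
      have h6 := mul_le_mul_of_nonneg_left (hb0 k) (show 0 ≤ 1 / (2 * s) by positivity)
      have h7 : θ / s * (b k / γ) = 1 / (2 * s) * (L_F * b k) := by
        rw [hθd]; field_simp
      rw [h7]; exact h6
    have h8 := hid k
    have h9 := hM ((u k - us) - (u (k+1) - us))
    have h10 : (a k + b k + c k) / γ ≤ φ k - φ (k+1) - ‖d‖ ^ 2 / 2 + ⟪d, g⟫ := by
      rw [div_le_iff₀ hγ0, h8, mul_comm]
      exact mul_le_mul_of_nonneg_right (by linarith) hγ0.le
    have h11 : m * (a k + b k + c k) ≤ (1 - θ / s) / γ * (a k + b k + c k) :=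
      mul_le_mul_of_nonneg_right hm1 (by linarith [ha0 k, hbn k, hcn k])
    have h12 : m * ‖d‖ ^ 2 ≤ (1 - s) / 2 * ‖d‖ ^ 2 := mul_le_mul_of_nonneg_right hm2 (sq_nonneg _)
    have h13 : (1 - θ / s) / γ * (a k + b k + c k)
        = (a k + b k + c k) / γ - θ / s * (b k / γ) - θ / s * ((a k + c k) / γ) := by ring
    have h14 : 0 ≤ θ / s * ((a k + c k) / γ) := by
      have := ha0 k
      have := hcn k
      positivity
    rw [mul_add]
    linarith
  obtain ⟨c0, hc0p, hly⟩ := hDs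
  have hSD : Summable (fun k => a k + b k + c k + ‖w k - w (k+1)‖ ^ 2) :=
    aux_telescope hc0p (fun k => by have := ha0 k; have := hbn k; have := hcn k; positivity) hφ0 hly
  have hSu1 : Summable (fun k => ‖u (k+1) - us‖ ^ 2) := by
    refine Summable.of_nonneg_of_le (fun k => sq_nonneg _) (fun k => ?_) (hSD.mul_left L)
    refine (hc0 k).trans (mul_le_mul_of_nonneg_left ?_ hL.le)
    linarith [ha0 k, hbn k, sq_nonneg ‖w k - w (k+1)‖]
  have hSu : Summable (fun k => ‖u k - us‖ ^ 2) :=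
    (summable_nat_add_iff (f := fun k => ‖u k - us‖ ^ 2) 1).1 hSu1
  -- lower bound
  have hlow : ∀ k, 0 ≤ F (x (k+1)) + R (x (k+1)) + H (K (x (k+1)))
        - (F xs + R xs + H (K xs)) := by
    intro k
    have h1 := aux_convex hFconv hFgrad xs (x (k+1))
    have h2 := hrs (x (k+1))
    have h3 := aux_convex hHconv hHgrad (K xs) (K (x (k+1)))
    rw [← map_sub, ← hus, ← ContinuousLinearMap.adjoint_inner_left] at h3
    have h4 : ⟪F' xs + rs + A us, x (k+1) - xs⟫ = 0 := by rw [hopt, inner_zero_left]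
    rw [inner_add_left, inner_add_left] at h4
    linarith
  set B := γ * η + γ * (‖K‖ * ‖K‖) with hB
  have hη0 : 0 ≤ η := (sq_nonneg _).trans hη
  have hB0 : 0 ≤ B := by positivity
  have hres : ∀ k, ‖K (x (k+1)) - p k‖ ^ 2 ≤ 3 * (B ^ 2 * ‖u k - us‖ ^ 2
      + B ^ 2 * ‖u (k+1) - us‖ ^ 2 + (γ * ‖K‖) ^ 2 * ‖w k - w (k+1)‖ ^ 2) := by
    intro k
    have e : K (x (k+1)) - p k = (γ * η) • ((u (k+1) - us) - (u k - us))
        + γ • K (w k - w (k+1)) - γ • K (A ((u (k+1) - us) - (u k - us))) := by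
      rw [hp]
      simp only [hw, map_sub, smul_sub]
      abel
    have h1 : ‖K (x (k+1)) - p k‖ ≤ B * ‖u k - us‖ + B * ‖u (k+1) - us‖
        + γ * ‖K‖ * ‖w k - w (k+1)‖ := by
      rw [e]
      refine (norm_sub_le _ _).trans ?_
      have h2 := norm_add_le ((γ * η) • ((u (k+1) - us) - (u k - us))) (γ • K (w k - w (k+1)))
      rw [norm_smul, norm_smul, Real.norm_of_nonneg (by positivity : 0 ≤ γ * η),
        Real.norm_of_nonneg hγ0.le] at h2
      rw [norm_smul γ (K (A _)), Real.norm_of_nonneg hγ0.le]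
      have h3 := norm_sub_le (u (k+1) - us) (u k - us)
      set v := (u (k+1) - us) - (u k - us)
      have h4 : ‖K (A v)‖ ≤ ‖K‖ * ‖K‖ * ‖v‖ := by
        have h5 := K.le_opNorm (A v)
        have h6 : ‖A v‖ ≤ ‖K‖ * ‖v‖ := by
          have := A.le_opNorm v
          rwa [hA, LinearIsometryEquiv.norm_map] at this
        have h7 := mul_le_mul_of_nonneg_left h6 (norm_nonneg K)
        linarith
      have h8 := mul_le_mul_of_nonneg_left h4 hγ0.le
      have h9 := mul_le_mul_of_nonneg_left (K.le_opNorm (w k - w (k+1))) hγ0.le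
      have h10 := mul_le_mul_of_nonneg_left h3 hB0
      have h11 : B * ‖v‖ = γ * η * ‖v‖ + γ * (‖K‖ * ‖K‖ * ‖v‖) := by rw [hB]; ring
      linarith
    have h2 := pow_le_pow_left₀ (norm_nonneg _) h1 2
    have h3 : ∀ α β δ : ℝ, (α + β + δ) ^ 2 ≤ 3 * (α ^ 2 + β ^ 2 + δ ^ 2) := fun α β δ => by
      nlinarith [sq_nonneg (α - β), sq_nonneg (β - δ), sq_nonneg (α - δ)]
    refine h2.trans ((h3 _ _ _).trans (le_of_eq ?_))
    ring
  have hSw : Summable (fun k => ‖w k - w (k+1)‖ ^ 2) := by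
    refine Summable.of_nonneg_of_le (fun k => sq_nonneg _) (fun k => ?_) hSD
    linarith [ha0 k, hbn k, hcn k]
  have hSres : Summable (fun k => ‖K (x (k+1)) - p k‖ ^ 2) := by
    refine Summable.of_nonneg_of_le (fun k => sq_nonneg _) hres ?_
    exact (((hSu.mul_left _).add (hSu1.mul_left _)).add (hSw.mul_left _)).mul_left 3
  refine Summable.of_nonneg_of_le hlow (fun k => ?_)
    ((hSD.add (hSu1.mul_left (1/2))).add (hSres.mul_left (L/2 + 1/2)))
  have h1 := aux_convex hFconv hFgrad (x (k+1)) xs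
  have h2 := hx k xs
  have h3 := aux_convex hHconv hHgrad (p k) (K xs)
  have h4 := aux_descent hHgrad hHlip (p k) (K (x (k+1)))
  rw [← hu] at h3 h4
  rw [← neg_sub (x (k+1)) xs, inner_neg_right] at h1 h2
  have h5 : ⟪u (k+1), K xs - p k⟫ = ⟪u (k+1), K (x (k+1)) - p k⟫ - ⟪u (k+1), K (x (k+1) - xs)⟫ := by
    rw [← inner_sub_right, map_sub]; congr 1; abel
  have h6 : ⟪F' xs + rs + A us, x (k+1) - xs⟫ = 0 := by rw [hopt, inner_zero_left]
  rw [inner_add_left, inner_add_left, ContinuousLinearMap.adjoint_inner_left] at h6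
  have h7 : ⟪u (k+1), K (x (k+1) - xs)⟫ - ⟪us, K (x (k+1) - xs)⟫
      = c k + ⟪u (k+1) - us, K (x (k+1)) - p k⟫ := by
    simp only [hc]
    rw [← inner_sub_left, ← inner_add_right, map_sub]; congr 1; abel
  have h8 : ⟪u (k+1) - us, K (x (k+1)) - p k⟫
      ≤ 1/2 * ‖u (k+1) - us‖ ^ 2 + 1/2 * ‖K (x (k+1)) - p k‖ ^ 2 := by
    have := real_inner_le_norm (u (k+1) - us) (K (x (k+1)) - p k)
    nlinarith [sq_nonneg (‖u (k+1) - us‖ - ‖K (x (k+1)) - p k‖)]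
  have h9 : a k = ⟪q k - A (u k) - (1/γ) • x (k+1), x (k+1) - xs⟫ - ⟪rs, x (k+1) - xs⟫ :=
    inner_sub_left _ _ _
  have h10 : b k = ⟪F' (x (k+1)), x (k+1) - xs⟫ - ⟪F' xs, x (k+1) - xs⟫ :=
    inner_sub_left _ _ _
  have h11 := sq_nonneg ‖w k - w (k+1)‖
  linarith
/-- Theorem 1(iii): `o(1/k)` best-iterate rate of the PD3O algorithm when `H` is smooth. -/
theorem pd3o_best_iterate_rate
    {𝒳 𝒰 : Type*}
    [NormedAddCommGroup 𝒳] [InnerProductSpace ℝ 𝒳] [FiniteDimensional ℝ 𝒳]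
    [NormedAddCommGroup 𝒰] [InnerProductSpace ℝ 𝒰] [FiniteDimensional ℝ 𝒰]
    (K : 𝒳 →L[ℝ] 𝒰)
    (F R : 𝒳 → ℝ) (H : 𝒰 → ℝ) (F' : 𝒳 → 𝒳) (L_F : ℝ)
    (hLF : 0 < L_F)
    (hFconv : ConvexOn ℝ Set.univ F)
    (hRconv : ConvexOn ℝ Set.univ R)
    (hHconv : ConvexOn ℝ Set.univ H)
    (hFgrad : ∀ z, HasGradientAt F (F' z) z)
    (hFlip : ∀ z z', ‖F' z - F' z'‖ ≤ L_F * ‖z - z'‖)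
    -- H is L-smooth
    (H' : 𝒰 → 𝒰) (L : ℝ) (hL : 0 < L)
    (hHgrad : ∀ v, HasGradientAt H (H' v) v)
    (hHlip : ∀ v v', ‖H' v - H' v'‖ ≤ L * ‖v - v'‖)
    -- Assumption 1: existence of a primal-dual solution
    (xstar : 𝒳) (rstar : 𝒳) (hstar : 𝒰)
    (hrstar : IsSubgradientAt R xstar rstar)
    (hhstar : IsSubgradientAt H (K xstar) hstar)
    (hopt : F' xstar + rstar + (ContinuousLinearMap.adjoint K) hstar = 0)
    -- parameters
    (γ η : ℝ) (hγ0 : 0 < γ) (hγ2 : γ < 2 / L_F) (hη : ‖K‖ ^ 2 ≤ η)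
    -- PD3O iterates
    (x q : ℕ → 𝒳) (u : ℕ → 𝒰)
    (hx : ∀ k, IsProxPt γ R
      (γ • (q k - (ContinuousLinearMap.adjoint K) (u k))) (x (k+1)))
    (hq : ∀ k, q (k+1) = (1/γ) • x (k+1) - F' (x (k+1)))
    (hu : ∀ k, ∃ p, IsProxPt (γ*η) H
        ((γ*η) • (u k + (1/η) • K ((1/γ) • x (k+1) + q (k+1) - q k))) p ∧
      u (k+1) = (u k + (1/η) • K ((1/γ) • x (k+1) + q (k+1) - q k))
        - (1/(γ*η)) • p) :
    Tendsto (fun k : ℕ => ((k : ℝ) + 1) *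
      ((Finset.Icc 1 (k+1)).inf' (Finset.nonempty_Icc.mpr (by omega))
          (fun i => F (x i) + R (x i) + H (K (x i)))
        - (F xstar + R xstar + H (K xstar))))
      atTop (𝓝 0) := by
  have hR : ∀ k, IsSubgradientAt R (x (k+1))
      (q k - (ContinuousLinearMap.adjoint K) (u k) - (1/γ) • x (k+1)) :=
    fun k => aux_prox hRconv hγ0 (hx k)
  have hus := aux_subgrad hHgrad hhstar
  have hlow : ∀ k, 0 ≤ F (x (k+1)) + R (x (k+1)) + H (K (x (k+1)))
        - (F xstar + R xstar + H (K xstar)) := by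
    intro k
    have h1 := aux_convex hFconv hFgrad xstar (x (k+1))
    have h2 := hrstar (x (k+1))
    have h3 := hhstar (K (x (k+1)))
    rw [← map_sub, ← ContinuousLinearMap.adjoint_inner_left] at h3
    have h4 : ⟪F' xstar + rstar + (ContinuousLinearMap.adjoint K) hstar, x (k+1) - xstar⟫ = 0 := by
      rw [hopt, inner_zero_left]
    rw [inner_add_left, inner_add_left] at h4
    linarith
  refine aux_rate (a := fun i => F (x i) + R (x i) + H (K (x i))) hlow ?_ _
  have hη0 : 0 ≤ η := (sq_nonneg _).trans hη
  rcases hη0.eq_or_lt with h0 | hpos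
  · -- degenerate case `K = 0`
    have hK : K = 0 := by
      rw [← h0] at hη
      have : ‖K‖ = 0 := by nlinarith [norm_nonneg K]
      exact norm_eq_zero.1 this
    subst hK
    refine aux_core 0 F R H F' L_F hLF hFconv hHconv hFgrad hFlip H' L hL hHgrad hHlip xstar rstar
      hstar hrstar hus hopt γ 1 hγ0 hγ2 (by simp) x q (fun _ => H' 0) (fun _ => 0) ?_ hq
      (fun _ => rfl) (fun k => by simp)
    intro k
    have := hR k
    simpa using this
  · choose p hp1 hp2 using hu
    have hση : 0 < γ * η := mul_pos hγ0 hpos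
    refine aux_core K F R H F' L_F hLF hFconv hHconv hFgrad hFlip H' L hL hHgrad hHlip xstar rstar
      hstar hrstar hus hopt γ η hγ0 hγ2 hη x q u p hR hq ?_ ?_
    · intro k
      rw [hp2 k]
      exact aux_subgrad hHgrad (aux_prox hHconv hση (hp1 k))
    · intro k
      rw [hp2 k, sub_sub_eq_add_sub, add_sub_add_left_eq_sub, smul_sub, smul_smul, smul_smul,
        mul_one_div_cancel hση.ne', one_smul]
      have e1 : γ * η * (1 / η) = γ := by field_simp
      have e2 : γ * (1 / γ) = 1 := by field_simp
      rw [e1, add_sub_assoc, map_add, map_smul, smul_add, smul_smul, e2, one_smul]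
      abel
end
end

section
/- Lemma 2 (linear convergence of the Davis–Yin algorithm): Suppose μ_F̃ + μ_G + μ_J > 0, and that G is differentiable with L_G-Lipschitz gradient for some L_G > 0, or J is differentiable with L_J-Lipschitz gradient for some L_J > 0. Let z* be the unique minimizer of F̃ + G + J and u_G* the unique element with u_G* ∈ ∂G(z*) and −∇F̃(z*) − u_G* ∈ ∂J(z*); set r* = z* + γ·u_G*. Let γ_k ≡ γ ∈ (0, 2/L_F̃). Then there exists ρ ∈ (0,1] such that for every k ≥ 0, ‖r^k − r*‖² ≤ (1−ρ)^k · ‖r⁰ − r*‖². -/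
open Filter Topology RealInnerProductSpace

noncomputable section

theorem dy_lim (A B C : ℝ) (h : ∀ t : ℝ, 0 < t → t < 1 → A ≤ B + t * C) : A ≤ B := by
  by_contra hlt
  push Not at hlt
  have hC : 0 < |C| + 1 := by positivity
  have hpos : 0 < A - B := by linarith
  set t := min (1/2) ((A - B) / (2 * (|C| + 1))) with ht
  have ht0 : 0 < t := by positivity
  have ht1 : t < 1 := lt_of_le_of_lt (min_le_left _ _) (by norm_num)
  have h1 := h t ht0 ht1
  have h2 : t ≤ (A - B) / (2 * (|C| + 1)) := min_le_right _ _
  rw [le_div_iff₀ (by positivity)] at h2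
  have h3 : t * C ≤ t * |C| := mul_le_mul_of_nonneg_left (le_abs_self C) ht0.le
  nlinarith

theorem dy_core {E : Type*} [NormedAddCommGroup E] [InnerProductSpace ℝ E]
    (γ L LL μF μG μJ : ℝ) (hγ : 0 < γ) (hL : 0 < L) (hγL : γ * L < 2)
    (hμF : 0 ≤ μF) (hμG : 0 ≤ μG) (hμJ : 0 ≤ μJ) (hμ : 0 < μF + μG + μJ) :
    ∃ K : ℝ, 1 ≤ K ∧ ∀ a b g f j : E, b = a - γ • (g + j + f) →
      μG * ‖a‖ ^ 2 ≤ ⟪g, a⟫ → μJ * ‖b‖ ^ 2 ≤ ⟪j, b⟫ → μF * ‖a‖ ^ 2 ≤ ⟪f, a⟫ →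
      ‖f‖ ^ 2 ≤ L * ⟪f, a⟫ → (‖g‖ ≤ LL * ‖a‖ ∨ ‖j‖ ≤ LL * ‖b‖) →
      ‖a + γ • g‖ ^ 2 ≤ K * (‖a + γ • g‖ ^ 2 - ‖b + γ • g‖ ^ 2) := by
  have tri : ∀ x y : E, ‖x + y‖ ^ 2 ≤ 2 * ‖x‖ ^ 2 + 2 * ‖y‖ ^ 2 := by
    intro x y
    have h1 := norm_add_sq_real x y
    have h2 := norm_sub_sq_real x y
    nlinarith [sq_nonneg ‖x - y‖]
  set c := γ * (2 - γ * L) with hc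
  have hc0 : 0 < c := mul_pos hγ (by linarith)
  -- key facts
  let P : E → E → E → E → E → ℝ → Prop := fun a b g f j D =>
    0 ≤ D ∧ μG * ‖a‖ ^ 2 ≤ (1 / (2 * γ)) * D ∧ μJ * ‖b‖ ^ 2 ≤ (1 / (2 * γ)) * D ∧
      μF * ‖a‖ ^ 2 ≤ (1 / c) * D ∧ ‖g + j‖ ^ 2 ≤ (1 / γ ^ 2) * D ∧ ‖f‖ ^ 2 ≤ (L / c) * D ∧
      b = a - γ • (g + j + f)
  have hP : ∀ a b g f j : E, b = a - γ • (g + j + f) →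
      μG * ‖a‖ ^ 2 ≤ ⟪g, a⟫ → μJ * ‖b‖ ^ 2 ≤ ⟪j, b⟫ → μF * ‖a‖ ^ 2 ≤ ⟪f, a⟫ →
      ‖f‖ ^ 2 ≤ L * ⟪f, a⟫ → P a b g f j (‖a + γ • g‖ ^ 2 - ‖b + γ • g‖ ^ 2) := by
    intro a b g f j hb hg hj hf hf2
    have hid : ‖a + γ • g‖ ^ 2 - ‖b + γ • g‖ ^ 2 = 2 * γ * ⟪g, a⟫ + 2 * γ * ⟪j, b⟫
        + (2 * γ * ⟪f, a⟫ - γ ^ 2 * ‖f‖ ^ 2) + γ ^ 2 * ‖g + j‖ ^ 2 := by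
      subst hb
      simp only [← real_inner_self_eq_norm_sq, inner_add_left, inner_add_right, inner_sub_left,
        inner_sub_right, real_inner_smul_left, real_inner_smul_right]
      rw [real_inner_comm g a, real_inner_comm f a, real_inner_comm j a, real_inner_comm g f,
        real_inner_comm g j, real_inner_comm f j]
      ring
    set D := ‖a + γ • g‖ ^ 2 - ‖b + γ • g‖ ^ 2
    have h1 : 0 ≤ ⟪g, a⟫ := le_trans (by positivity) hg
    have h2 : 0 ≤ ⟪j, b⟫ := le_trans (by positivity) hj
    have h3 : 0 ≤ ⟪f, a⟫ := le_trans (by positivity) hf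
    have h4 : γ ^ 2 * ‖f‖ ^ 2 ≤ γ ^ 2 * (L * ⟪f, a⟫) :=
      mul_le_mul_of_nonneg_left hf2 (by positivity)
    have h5 : c * ⟪f, a⟫ ≤ 2 * γ * ⟪f, a⟫ - γ ^ 2 * ‖f‖ ^ 2 := by rw [hc]; nlinarith
    have h6 : 0 ≤ γ * ⟪g, a⟫ := by positivity
    have h7 : 0 ≤ γ * ⟪j, b⟫ := by positivity
    have h8 : 0 ≤ c * ⟪f, a⟫ := by positivity
    have h9 : 0 ≤ γ ^ 2 * ‖g + j‖ ^ 2 := by positivity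
    have e1 : ⟪f, a⟫ ≤ (1 / c) * D := by
      rw [one_div, ← div_eq_inv_mul, le_div_iff₀ hc0]; linarith
    refine ⟨by linarith, hg.trans ?_, hj.trans ?_, hf.trans e1, ?_, hf2.trans ?_, hb⟩
    · rw [one_div, ← div_eq_inv_mul, le_div_iff₀ (by positivity)]; linarith
    · rw [one_div, ← div_eq_inv_mul, le_div_iff₀ (by positivity)]; linarith
    · rw [one_div, ← div_eq_inv_mul, le_div_iff₀ (by positivity)]; linarith
    · calc L * ⟪f, a⟫ ≤ L * ((1 / c) * D) := mul_le_mul_of_nonneg_left e1 hL.le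
        _ = _ := by ring
  -- ‖a - b‖² control
  obtain ⟨Kd, hKd, hd⟩ : ∃ K : ℝ, 0 ≤ K ∧ ∀ a b g f j D, P a b g f j D → ‖a - b‖ ^ 2 ≤ K * D := by
    refine ⟨γ ^ 2 * (2 * (1 / γ ^ 2) + 2 * (L / c)), by positivity, ?_⟩
    rintro a b g f j D ⟨hD, -, -, -, h1, h2, hb⟩
    have : a - b = γ • (g + j + f) := by rw [hb]; abel
    rw [this, norm_smul, mul_pow, Real.norm_eq_abs, sq_abs]
    calc γ ^ 2 * ‖g + j + f‖ ^ 2 ≤ γ ^ 2 * (2 * ((1 / γ ^ 2) * D) + 2 * ((L / c) * D)) :=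
          mul_le_mul_of_nonneg_left (by linarith [tri (g + j) f]) (by positivity)
      _ = _ := by ring
  have dvd : ∀ m x y : ℝ, 0 < m → m * x ≤ y → x ≤ (1 / m) * y := by
    intro m x y hm h
    rw [one_div, ← div_eq_inv_mul, le_div_iff₀ hm]; linarith
  obtain ⟨Ka, hKa, ha⟩ : ∃ K : ℝ, 0 ≤ K ∧ ∀ a b g f j D, P a b g f j D → ‖a‖ ^ 2 ≤ K * D := by
    have hcase : 0 < μF ∨ 0 < μG ∨ 0 < μJ := by
      by_contra hh
      push Not at hh
      linarith [hh.1, hh.2.1, hh.2.2]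
    rcases hcase with h | h | h
    · refine ⟨1 / μF * (1 / c), by positivity, ?_⟩
      rintro a b g f j D ⟨hD, -, -, h1, -⟩
      rw [mul_assoc]; exact dvd _ _ _ h h1
    · refine ⟨1 / μG * (1 / (2 * γ)), by positivity, ?_⟩
      rintro a b g f j D ⟨hD, h1, -⟩
      rw [mul_assoc]; exact dvd _ _ _ h h1
    · refine ⟨2 * Kd + 2 * (1 / μJ * (1 / (2 * γ))), by positivity, ?_⟩
      intro a b g f j D hp
      have h3 := hd _ _ _ _ _ _ hp
      obtain ⟨hD, -, h1, -⟩ := hp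
      have h2 := dvd _ _ _ h h1
      have h4 := tri (a - b) b
      rw [sub_add_cancel] at h4
      linarith
  obtain ⟨Kb, hKb, hb'⟩ : ∃ K : ℝ, 0 ≤ K ∧ ∀ a b g f j D, P a b g f j D → ‖b‖ ^ 2 ≤ K * D := by
    refine ⟨2 * Ka + 2 * Kd, by positivity, ?_⟩
    intro a b g f j D hp
    have h3 := hd _ _ _ _ _ _ hp
    have h2 := ha _ _ _ _ _ _ hp
    have h4 := tri a (-(a - b))
    rw [norm_neg] at h4
    have : a + -(a - b) = b := by abel
    rw [this] at h4
    linarith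
  obtain ⟨Kg, hKg, hg'⟩ : ∃ K : ℝ, 0 ≤ K ∧ ∀ a b g f j D, P a b g f j D →
      (‖g‖ ≤ LL * ‖a‖ ∨ ‖j‖ ≤ LL * ‖b‖) → ‖g‖ ^ 2 ≤ K * D := by
    refine ⟨LL ^ 2 * Ka + (2 * (1 / γ ^ 2) + 2 * (LL ^ 2 * Kb)), by positivity, ?_⟩
    intro a b g f j D hp hs
    have h2 := ha _ _ _ _ _ _ hp
    have h3 := hb' _ _ _ _ _ _ hp
    obtain ⟨hD, -, -, -, h1, -⟩ := hp
    have p1 : LL ^ 2 * ‖a‖ ^ 2 ≤ LL ^ 2 * (Ka * D) := mul_le_mul_of_nonneg_left h2 (by positivity)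
    have p2 : LL ^ 2 * ‖b‖ ^ 2 ≤ LL ^ 2 * (Kb * D) := mul_le_mul_of_nonneg_left h3 (by positivity)
    have q1 : 0 ≤ LL ^ 2 * (Ka * D) := by positivity
    have q2 : 0 ≤ LL ^ 2 * (Kb * D) := by positivity
    have q3 : 0 ≤ (1 / γ ^ 2) * D := by positivity
    rcases hs with hs | hs
    · have := pow_le_pow_left₀ (norm_nonneg _) hs 2
      rw [mul_pow] at this
      linarith
    · have := pow_le_pow_left₀ (norm_nonneg _) hs 2
      rw [mul_pow] at this
      have h4 := tri (g + j) (-j)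
      rw [norm_neg, add_neg_cancel_right] at h4
      linarith
  refine ⟨1 + (2 * Ka + 2 * (γ ^ 2 * Kg)), by linarith [show 0 ≤ 2 * Ka + 2 * (γ ^ 2 * Kg) by positivity], ?_⟩
  intro a b g f j hb hg hj hf hf2 hs
  have hp := hP a b g f j hb hg hj hf hf2
  have h1 := ha _ _ _ _ _ _ hp
  have h2 := hg' _ _ _ _ _ _ hp hs
  have hD := hp.1
  have h3 := tri a (γ • g)
  rw [norm_smul, mul_pow, Real.norm_eq_abs, sq_abs] at h3
  have p1 := mul_le_mul_of_nonneg_left h2 (sq_nonneg γ)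
  linarith

theorem dy_hasDerivAt {E : Type*} [NormedAddCommGroup E] [InnerProductSpace ℝ E]
    [FiniteDimensional ℝ E] (F : E → ℝ) (F' : E → E) (h : ∀ z, HasGradientAt F (F' z) z)
    (x v : E) (t : ℝ) : HasDerivAt (fun s : ℝ => F (x + s • v)) ⟪F' (x + t • v), v⟫ t := by
  have h1 := (h (x + t • v)).hasFDerivAt
  have h2 : HasDerivAt (fun s : ℝ => x + s • v) v t := by
    simpa using ((hasDerivAt_id t).smul_const v).const_add x
  have h3 := h1.comp_hasDerivAt t h2
  rw [InnerProductSpace.toDual_apply_apply] at h3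
  exact h3

theorem dy_seg {E : Type*} [NormedAddCommGroup E] [InnerProductSpace ℝ E]
    (G : E → ℝ) (μ : ℝ) (hG : ConvexOn ℝ Set.univ fun z => G z - μ / 2 * ‖z‖ ^ 2)
    (x y : E) (t : ℝ) (ht0 : 0 < t) (ht1 : t < 1) :
    G (x + t • (y - x)) ≤ (1 - t) * G x + t * G y - μ / 2 * (t * (1 - t) * ‖y - x‖ ^ 2) := by
  have h := hG.2 (Set.mem_univ x) (Set.mem_univ y) (by linarith : 0 ≤ 1 - t) ht0.le (by ring)
  have e : (1 - t) • x + t • y = x + t • (y - x) := by module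
  rw [e] at h
  have hn : ‖x + t • (y - x)‖ ^ 2
      = (1 - t) * ‖x‖ ^ 2 + t * ‖y‖ ^ 2 - t * (1 - t) * ‖y - x‖ ^ 2 := by
    simp only [← real_inner_self_eq_norm_sq, inner_add_left, inner_add_right, inner_sub_left,
        inner_sub_right, real_inner_smul_left, real_inner_smul_right]
    rw [real_inner_comm x y]
    ring
  simp only [smul_eq_mul] at h
  rw [hn] at h
  linarith

theorem dy_strong {E : Type*} [NormedAddCommGroup E] [InnerProductSpace ℝ E]
    (G : E → ℝ) (μ : ℝ) (hG : ConvexOn ℝ Set.univ fun z => G z - μ / 2 * ‖z‖ ^ 2)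
    (z u : E) (hu : IsSubgradientAt G z u) (y : E) :
    G z + ⟪u, y - z⟫ + μ / 2 * ‖y - z‖ ^ 2 ≤ G y := by
  apply dy_lim _ _ (μ / 2 * ‖y - z‖ ^ 2)
  intro t ht0 ht1
  have h1 := dy_seg G μ hG z y t ht0 ht1
  have h2 := hu (z + t • (y - z))
  rw [add_sub_cancel_left, real_inner_smul_right] at h2
  refine le_of_mul_le_mul_left ?_ ht0
  nlinarith

theorem dy_mono {E : Type*} [NormedAddCommGroup E] [InnerProductSpace ℝ E]
    (G : E → ℝ) (μ : ℝ) (hG : ConvexOn ℝ Set.univ fun z => G z - μ / 2 * ‖z‖ ^ 2)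
    (z u z' u' : E) (hu : IsSubgradientAt G z u) (hu' : IsSubgradientAt G z' u') :
    μ * ‖z - z'‖ ^ 2 ≤ ⟪u - u', z - z'⟫ := by
  have h1 := dy_strong G μ hG z u hu z'
  have h2 := dy_strong G μ hG z' u' hu' z
  rw [norm_sub_rev] at h1
  have h3 : ⟪u, z' - z⟫ = - ⟪u, z - z'⟫ := by rw [← neg_sub, inner_neg_right]
  rw [inner_sub_left]
  linarith

theorem dy_prox {E : Type*} [NormedAddCommGroup E] [InnerProductSpace ℝ E]
    (G : E → ℝ) (hG : ConvexOn ℝ Set.univ G) (γ : ℝ) (hγ : 0 < γ) (z p : E)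
    (hp : IsProxPt γ G z p) : IsSubgradientAt G p (γ⁻¹ • (z - p)) := by
  intro y
  rw [real_inner_smul_left]
  refine le_of_mul_le_mul_left ?_ hγ
  rw [mul_add, mul_inv_cancel_left₀ hγ.ne']
  apply dy_lim _ _ (‖y - p‖ ^ 2 / 2)
  intro t ht0 ht1
  have h1 := dy_seg G 0 (by simpa using hG) p y t ht0 ht1
  have h2 := hp (p + t • (y - p))
  have h3 := mul_le_mul_of_nonneg_left h1 hγ.le
  have e : p + t • (y - p) - z = t • (y - p) - (z - p) := by abel
  rw [e, norm_sub_sq_real (t • (y - p)) (z - p), norm_smul, mul_pow, Real.norm_eq_abs, sq_abs,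
    real_inner_smul_left, norm_sub_rev p z, real_inner_comm] at h2
  refine le_of_mul_le_mul_left ?_ ht0
  nlinarith

theorem dy_grad_sub {E : Type*} [NormedAddCommGroup E] [InnerProductSpace ℝ E]
    [FiniteDimensional ℝ E] (F : E → ℝ) (F' : E → E) (h : ∀ z, HasGradientAt F (F' z) z)
    (hF : ConvexOn ℝ Set.univ F) (z : E) : IsSubgradientAt F z (F' z) := by
  intro y
  have hd := dy_hasDerivAt F F' h z (y - z) 0
  have hc : ConvexOn ℝ Set.univ (fun s : ℝ => F (z + s • (y - z))) := by
    have := hF.comp_affineMap (AffineMap.lineMap z y : ℝ →ᵃ[ℝ] E)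
    rw [Set.preimage_univ] at this
    have e : (F ∘ (AffineMap.lineMap z y : ℝ →ᵃ[ℝ] E)) = fun s : ℝ => F (z + s • (y - z)) := by
      funext s
      simp [AffineMap.lineMap_apply, add_comm]
    rwa [e] at this
  have := hc.le_slope_of_hasDerivAt (Set.mem_univ 0) (Set.mem_univ 1) one_pos hd
  simp [slope] at this
  linarith

theorem dy_sub_unique {E : Type*} [NormedAddCommGroup E] [InnerProductSpace ℝ E]
    [FiniteDimensional ℝ E] (F : E → ℝ) (F' : E → E) (h : ∀ z, HasGradientAt F (F' z) z)
    (z u : E) (hu : IsSubgradientAt F z u) : u = F' z := by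
  have hd := (dy_hasDerivAt F F' h z (u - F' z) 0).sub ((hasDerivAt_id (0 : ℝ)).mul_const ⟪u, u - F' z⟫)
  have hmin : IsLocalMin ((fun s : ℝ => F (z + s • (u - F' z))) -
      fun s : ℝ => id s * ⟪u, u - F' z⟫) 0 := by
    refine Filter.Eventually.of_forall fun s => ?_
    have := hu (z + s • (u - F' z))
    rw [add_sub_cancel_left, real_inner_smul_right] at this
    simp
    linarith
  have h0 := hmin.hasDerivAt_eq_zero hd
  simp only [zero_smul, add_zero, one_mul] at h0
  rw [← inner_sub_left, ← neg_sub, inner_neg_left, neg_eq_zero, inner_self_eq_zero] at h0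
  exact sub_eq_zero.1 h0

theorem dy_descent {E : Type*} [NormedAddCommGroup E] [InnerProductSpace ℝ E]
    [FiniteDimensional ℝ E] (F : E → ℝ) (F' : E → E) (h : ∀ z, HasGradientAt F (F' z) z)
    (L : ℝ) (hlip : ∀ z z', ‖F' z - F' z'‖ ≤ L * ‖z - z'‖) (x v : E) :
    F (x + v) ≤ F x + ⟪F' x, v⟫ + L / 2 * ‖v‖ ^ 2 := by
  have hd : ∀ t : ℝ, HasDerivAt (fun s : ℝ => F (x + s • v) - s * ⟪F' x, v⟫
      - s ^ 2 * (L / 2 * ‖v‖ ^ 2))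
      (⟪F' (x + t • v), v⟫ - 1 * ⟪F' x, v⟫ - (2 * t) * (L / 2 * ‖v‖ ^ 2)) t := by
    intro t
    have h1 := (dy_hasDerivAt F F' h x v t).sub ((hasDerivAt_id t).mul_const ⟪F' x, v⟫)
    have h2 := (hasDerivAt_pow 2 t).mul_const (L / 2 * ‖v‖ ^ 2)
    have h3 := h1.sub h2
    simp only [Nat.cast_ofNat, Nat.add_one_sub_one, pow_one] at h3
    exact h3
  have hanti := antitoneOn_of_deriv_nonpos (convex_Ici (0 : ℝ))
    (fun t _ => (hd t).continuousAt.continuousWithinAt)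
    (fun t _ => (hd t).differentiableAt.differentiableWithinAt)
    (by
      intro t ht
      rw [interior_Ici] at ht
      have ht0 : (0 : ℝ) < t := ht
      rw [(hd t).deriv, one_mul, ← inner_sub_left]
      have h1 := real_inner_le_norm (F' (x + t • v) - F' x) v
      have h2 := hlip (x + t • v) x
      rw [add_sub_cancel_left, norm_smul, Real.norm_eq_abs, abs_of_pos ht0] at h2
      have h3 := mul_le_mul_of_nonneg_right h2 (norm_nonneg v)
      nlinarith)
  have := hanti (Set.mem_Ici.2 le_rfl) (Set.mem_Ici.2 zero_le_one) zero_le_one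
  simp at this
  linarith

theorem dy_cocoercive {E : Type*} [NormedAddCommGroup E] [InnerProductSpace ℝ E]
    [FiniteDimensional ℝ E] (F : E → ℝ) (F' : E → E) (h : ∀ z, HasGradientAt F (F' z) z)
    (hF : ConvexOn ℝ Set.univ F) (L : ℝ) (hL : 0 < L)
    (hlip : ∀ z z', ‖F' z - F' z'‖ ≤ L * ‖z - z'‖) (x y : E) :
    ‖F' x - F' y‖ ^ 2 ≤ L * ⟪F' x - F' y, x - y⟫ := by
  have key : ∀ x y : E, F x + ⟪F' x, y - x⟫ + 1 / (2 * L) * ‖F' y - F' x‖ ^ 2 ≤ F y := by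
    intro x y
    have h1 := dy_descent F F' h L hlip y (-(L⁻¹ • (F' y - F' x)))
    have h2 := dy_grad_sub F F' h hF x (y + -(L⁻¹ • (F' y - F' x)))
    have e : y + -(L⁻¹ • (F' y - F' x)) - x = (y - x) - L⁻¹ • (F' y - F' x) := by abel
    rw [e, inner_sub_right, real_inner_smul_right] at h2
    rw [norm_neg, inner_neg_right, real_inner_smul_right, norm_smul, mul_pow, Real.norm_eq_abs,
      sq_abs] at h1
    have e2 : ⟪F' y, F' y - F' x⟫ - ⟪F' x, F' y - F' x⟫ = ‖F' y - F' x‖ ^ 2 := by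
      rw [← inner_sub_left, real_inner_self_eq_norm_sq]
    have e3 : L / 2 * (L⁻¹ ^ 2 * ‖F' y - F' x‖ ^ 2) = L⁻¹ * ‖F' y - F' x‖ ^ 2 / 2 := by
      field_simp
    have e4 : 1 / (2 * L) * ‖F' y - F' x‖ ^ 2 = L⁻¹ * ‖F' y - F' x‖ ^ 2 / 2 := by
      field_simp
    rw [e3] at h1
    rw [e4, ← e2]
    rw [← e2] at h1
    linarith
  have h1 := key x y
  have h2 := key y x
  rw [norm_sub_rev] at h1
  have h3 : ⟪F' x, y - x⟫ = - ⟪F' x, x - y⟫ := by rw [← neg_sub, inner_neg_right]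
  have h4 : 1 / (2 * L) * ‖F' x - F' y‖ ^ 2 + 1 / (2 * L) * ‖F' x - F' y‖ ^ 2
      = ‖F' x - F' y‖ ^ 2 / L := by field_simp; ring
  have h5 : ‖F' x - F' y‖ ^ 2 / L ≤ ⟪F' x - F' y, x - y⟫ := by
    rw [inner_sub_left, ← h4]; linarith
  rw [div_le_iff₀ hL] at h5
  linarith

/-- Lemma 2: linear convergence of the Davis–Yin algorithm (r-form) when
`μ_F̃ + μ_G + μ_J > 0` and `G` or `J` is smooth. -/
theorem davis_yin_linear_convergence
    {𝒵 : Type*}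
    [NormedAddCommGroup 𝒵] [InnerProductSpace ℝ 𝒵] [FiniteDimensional ℝ 𝒵]
    (Ft G J : 𝒵 → ℝ) (Ft' : 𝒵 → 𝒵) (L_Ft : ℝ)
    (hLFt : 0 < L_Ft)
    (hFtconv : ConvexOn ℝ Set.univ Ft)
    (hGconv : ConvexOn ℝ Set.univ G)
    (hJconv : ConvexOn ℝ Set.univ J)
    (hFtgrad : ∀ z, HasGradientAt Ft (Ft' z) z)
    (hFtlip : ∀ z z', ‖Ft' z - Ft' z'‖ ≤ L_Ft * ‖z - z'‖)
    -- strong convexity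
    (μFt μG μJ : ℝ) (hμFt : 0 ≤ μFt) (hμG : 0 ≤ μG) (hμJ : 0 ≤ μJ)
    (hμ : 0 < μFt + μG + μJ)
    (hFtsc : ConvexOn ℝ Set.univ fun z => Ft z - μFt / 2 * ‖z‖ ^ 2)
    (hGsc : ConvexOn ℝ Set.univ fun z => G z - μG / 2 * ‖z‖ ^ 2)
    (hJsc : ConvexOn ℝ Set.univ fun z => J z - μJ / 2 * ‖z‖ ^ 2)
    -- G is smooth or J is smooth
    (hsmooth :
      (∃ (G' : 𝒵 → 𝒵) (L_G : ℝ), 0 < L_G ∧ (∀ z, HasGradientAt G (G' z) z) ∧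
        ∀ z z', ‖G' z - G' z'‖ ≤ L_G * ‖z - z'‖) ∨
      (∃ (J' : 𝒵 → 𝒵) (L_J : ℝ), 0 < L_J ∧ (∀ z, HasGradientAt J (J' z) z) ∧
        ∀ z z', ‖J' z - J' z'‖ ≤ L_J * ‖z - z'‖))
    -- z* is the (unique) minimizer, with (unique) dual certificate u_G*
    (zstar : 𝒵)
    (hzstar : ∀ y, Ft zstar + G zstar + J zstar ≤ Ft y + G y + J y)
    (uGstar : 𝒵)
    (huGstar : IsSubgradientAt G zstar uGstar)
    (huGstar' : IsSubgradientAt J zstar (-(Ft' zstar) - uGstar))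
    -- constant stepsize
    (γ : ℝ) (hγ0 : 0 < γ) (hγ2 : γ < 2 / L_Ft)
    -- r* = z* + γ u_G*
    (rstar : 𝒵) (hrstar : rstar = zstar + γ • uGstar)
    -- Davis–Yin iterates, r-form
    (r zG zJ : ℕ → 𝒵)
    (hzG : ∀ k, IsProxPt γ G (r k) (zG (k+1)))
    (hzJ : ∀ k, IsProxPt γ J
      ((2:ℝ) • zG (k+1) - r k - γ • Ft' (zG (k+1))) (zJ (k+1)))
    (hr : ∀ k, r (k+1) = zJ (k+1) + r k - zG (k+1)) :
    ∃ ρ : ℝ, 0 < ρ ∧ ρ ≤ 1 ∧ ∀ k : ℕ,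
      ‖r k - rstar‖^2 ≤ (1 - ρ)^k * ‖r 0 - rstar‖^2 := by
  have hγL : γ * L_Ft < 2 := by rwa [lt_div_iff₀ hLFt] at hγ2
  obtain ⟨LL, hLL⟩ : ∃ LL : ℝ, (∀ z u z' u', IsSubgradientAt G z u → IsSubgradientAt G z' u' →
      ‖u - u'‖ ≤ LL * ‖z - z'‖) ∨ (∀ z u z' u', IsSubgradientAt J z u → IsSubgradientAt J z' u' →
      ‖u - u'‖ ≤ LL * ‖z - z'‖) := by
    rcases hsmooth with ⟨G', LG, -, hG', hl⟩ | ⟨J', LJ, -, hJ', hl⟩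
    · refine ⟨LG, Or.inl fun z u z' u' hu hu' => ?_⟩
      rw [dy_sub_unique G G' hG' z u hu, dy_sub_unique G G' hG' z' u' hu']
      exact hl z z'
    · refine ⟨LJ, Or.inr fun z u z' u' hu hu' => ?_⟩
      rw [dy_sub_unique J J' hJ' z u hu, dy_sub_unique J J' hJ' z' u' hu']
      exact hl z z'
  obtain ⟨K, hK1, hK⟩ := dy_core (E := 𝒵) γ L_Ft LL μFt μG μJ hγ0 hLFt hγL hμFt hμG hμJ hμ
  have hK0 : 0 < K := by linarith
  have hstep : ∀ k, ‖r (k + 1) - rstar‖ ^ 2 ≤ (1 - 1 / K) * ‖r k - rstar‖ ^ 2 := by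
    intro k
    have sG := dy_prox G hGconv γ hγ0 _ _ (hzG k)
    have sJ := dy_prox J hJconv γ hγ0 _ _ (hzJ k)
    set uG := γ⁻¹ • (r k - zG (k + 1)) with huG
    set uJ := γ⁻¹ • ((2:ℝ) • zG (k+1) - r k - γ • Ft' (zG (k+1)) - zJ (k + 1)) with huJ
    have eG : γ • uG = r k - zG (k + 1) := by rw [huG, smul_inv_smul₀ hγ0.ne']
    have eJ : γ • uJ = (2:ℝ) • zG (k+1) - r k - γ • Ft' (zG (k+1)) - zJ (k + 1) := by
      rw [huJ, smul_inv_smul₀ hγ0.ne']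
    have hmain := hK (zG (k + 1) - zstar) (zJ (k + 1) - zstar) (uG - uGstar)
      (Ft' (zG (k + 1)) - Ft' zstar) (uJ - (-(Ft' zstar) - uGstar))
      (by
        have : γ • (uG - uGstar + (uJ - (-(Ft' zstar) - uGstar)) + (Ft' (zG (k + 1)) - Ft' zstar))
            = γ • uG + γ • uJ + γ • Ft' (zG (k + 1)) := by module
        rw [this, eG, eJ]
        module)
      (dy_mono G μG hGsc _ _ _ _ sG huGstar)
      (dy_mono J μJ hJsc _ _ _ _ sJ huGstar')
      (dy_mono Ft μFt hFtsc _ _ _ _ (dy_grad_sub Ft Ft' hFtgrad hFtconv _)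
        (dy_grad_sub Ft Ft' hFtgrad hFtconv _))
      (dy_cocoercive Ft Ft' hFtgrad hFtconv L_Ft hLFt hFtlip _ _)
      (hLL.imp (fun h => h _ _ _ _ sG huGstar) (fun h => h _ _ _ _ sJ huGstar'))
    have e1 : zG (k + 1) - zstar + γ • (uG - uGstar) = r k - rstar := by
      rw [smul_sub, eG, hrstar]; abel
    have e2 : zJ (k + 1) - zstar + γ • (uG - uGstar) = r (k + 1) - rstar := by
      rw [smul_sub, eG, hrstar, hr]; abel
    rw [e1, e2] at hmain
    rw [← div_le_iff₀' hK0] at hmain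
    have : (1 - 1 / K) * ‖r k - rstar‖ ^ 2 = ‖r k - rstar‖ ^ 2 - ‖r k - rstar‖ ^ 2 / K := by ring
    rw [this]
    linarith
  have hle : 1 / K ≤ 1 := by rw [div_le_one hK0]; exact hK1
  refine ⟨1 / K, by positivity, hle, fun k => ?_⟩
  induction k with
  | zero => simp
  | succ k ih =>
    calc ‖r (k + 1) - rstar‖ ^ 2 ≤ (1 - 1 / K) * ‖r k - rstar‖ ^ 2 := hstep k
      _ ≤ (1 - 1 / K) * ((1 - 1 / K) ^ k * ‖r 0 - rstar‖ ^ 2) :=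
        mul_le_mul_of_nonneg_left ih (by linarith)
      _ = _ := by ring
end
end
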